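/- Let F be a field, let R be a noncommutative unital associative F-algebra which is a prime ring (i.e., for a, b ∈ R, if a·r·b = 0 for all r ∈ R, then a = 0 or b = 0), and let p ∈ F[x] be a nonconstant polynomial of degree n ≥ 1. Assume the center Z(R) of R contains at least n+1 distinct elements. Then: (a) the additive subgroup p[R,R]⁺ generated by {p(ab) − p(ba) : a, b ∈ R} is contained in the additive subgroup [R,R] generated by all commutators xy − yx; (b) there exists a nonzero two-sided ideal M of R such that xm − mx ∈ p[R,R]⁺ for all m ∈ M and x ∈ R; and (c) if in addition R is a simple ring, then p[R,R]⁺ = [R,R]. -/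

import Mathlib

set_option linter.unusedVariables false
set_option linter.unusedSectionVars false

namespace PC

/-- A nonzero two-sided ideal, as a set. -/
structure NZI {R : Type*} [Ring R] (J : Set R) : Prop where
  add : ∀ x y, x ∈ J → y ∈ J → x + y ∈ J
  ml : ∀ r x, x ∈ J → r * x ∈ J
  mr : ∀ r x, x ∈ J → x * r ∈ J
  nz : ∃ x ∈ J, x ≠ 0

/-- Primeness. -/
def Pr (R : Type*) [Ring R] : Prop := ∀ a b : R, (∀ r : R, a * r * b = 0) → a = 0 ∨ b = 0

section
variable {R : Type*} [Ring R]

theorem NZI.zero {J : Set R} (h : NZI J) : (0 : R) ∈ J := by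
  obtain ⟨x, hx, _⟩ := h.nz
  simpa using h.ml 0 x hx

theorem NZI.neg {J : Set R} (h : NZI J) {x : R} (hx : x ∈ J) : -x ∈ J := by
  simpa using h.ml (-1) x hx

theorem NZI.sub {J : Set R} (h : NZI J) {x y : R} (hx : x ∈ J) (hy : y ∈ J) : x - y ∈ J := by
  rw [sub_eq_add_neg]; exact h.add _ _ hx (h.neg hy)

theorem Pr.ne {hp : Pr R} {a b : R} (ha : a ≠ 0) (hb : b ≠ 0) : ∃ r, a * r * b ≠ 0 := by
  by_contra! h
  rcases hp a b h with h | h <;> contradiction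

theorem NZI.inter (hp : Pr R) {J K : Set R} (h : NZI J) (h' : NZI K) : NZI (J ∩ K) := by
  refine ⟨fun x y hx hy => ⟨h.add _ _ hx.1 hy.1, h'.add _ _ hx.2 hy.2⟩,
    fun r x hx => ⟨h.ml _ _ hx.1, h'.ml _ _ hx.2⟩,
    fun r x hx => ⟨h.mr _ _ hx.1, h'.mr _ _ hx.2⟩, ?_⟩
  obtain ⟨x, hx, hx0⟩ := h.nz
  obtain ⟨y, hy, hy0⟩ := h'.nz
  obtain ⟨r, hr⟩ := Pr.ne (hp := hp) hx0 hy0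
  exact ⟨x * r * y, ⟨h.mr _ _ (h.mr _ _ hx), h'.ml _ _ hy⟩, hr⟩

theorem NZI.univ [Nontrivial R] : NZI (Set.univ : Set R) :=
  ⟨by simp, by simp, by simp, ⟨1, by simp, one_ne_zero⟩⟩

/-- `a J = 0` implies `a = 0`. -/
theorem NZI.left_faithful (hp : Pr R) {J : Set R} (h : NZI J) {a : R}
    (ha : ∀ x ∈ J, a * x = 0) : a = 0 := by
  obtain ⟨x, hx, hx0⟩ := h.nz
  by_contra h0
  obtain ⟨r, hr⟩ := Pr.ne (hp := hp) h0 hx0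
  exact hr (by rw [mul_assoc]; exact ha _ (h.ml _ _ hx))

theorem NZI.right_faithful (hp : Pr R) {J : Set R} (h : NZI J) {a : R}
    (ha : ∀ x ∈ J, x * a = 0) : a = 0 := by
  obtain ⟨x, hx, hx0⟩ := h.nz
  by_contra h0
  obtain ⟨r, hr⟩ := Pr.ne (hp := hp) hx0 h0
  exact hr (ha _ (h.mr _ _ hx))

theorem NZI.prime (hp : Pr R) {J : Set R} (h : NZI J) {a b : R}
    (hab : ∀ x ∈ J, a * x * b = 0) : a = 0 ∨ b = 0 := by
  by_cases hb : b = 0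
  · exact Or.inr hb
  left
  apply h.left_faithful hp
  intro x hx
  rcases hp (a * x) b (fun r => by rw [mul_assoc a]; exact hab _ (h.mr _ _ hx)) with h1 | h1
  · exact h1
  · exact absurd h1 hb

end

section Q
variable (R : Type*) [Ring R]

/-- `φ` is additive and right linear on `J`. -/
structure PLin {R : Type*} [Ring R] (φ : R → R) (J : Set R) : Prop where
  nzi : NZI J
  add : ∀ x y, x ∈ J → y ∈ J → φ (x + y) = φ x + φ y
  mr : ∀ r x, x ∈ J → φ (x * r) = φ x * r

/-- Total functions that restrict to a right linear map on a nonzero ideal. -/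
abbrev PM : Type _ := {φ : R → R // ∃ J : Set R, PLin φ J}

variable {R}

theorem PLin.zero {φ : R → R} {J : Set R} (h : PLin φ J) : φ 0 = 0 := by
  have := h.mr 0 0 h.nzi.zero
  simpa using this

theorem PLin.pull (hp : Pr R) {φ : R → R} {J : Set R} (h : PLin φ J) {I : Set R} (hI : NZI I) :
    ∃ K, NZI K ∧ K ⊆ J ∧ ∀ x ∈ K, φ x ∈ I := by
  refine ⟨{z | z ∈ J ∧ ∀ r, φ (r * z) ∈ I}, ⟨?_, ?_, ?_, ?_⟩, fun x hx => hx.1, ?_⟩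
  · rintro x y ⟨hx, hx'⟩ ⟨hy, hy'⟩
    refine ⟨h.nzi.add _ _ hx hy, fun r => ?_⟩
    rw [mul_add, h.add _ _ (h.nzi.ml _ _ hx) (h.nzi.ml _ _ hy)]
    exact hI.add _ _ (hx' r) (hy' r)
  · rintro r x ⟨hx, hx'⟩
    refine ⟨h.nzi.ml _ _ hx, fun s => ?_⟩
    rw [← mul_assoc]; exact hx' _
  · rintro r x ⟨hx, hx'⟩
    refine ⟨h.nzi.mr _ _ hx, fun s => ?_⟩
    rw [← mul_assoc, h.mr _ _ (h.nzi.ml _ _ hx)]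
    exact hI.mr _ _ (hx' s)
  · obtain ⟨x, hx, hx0⟩ := h.nzi.nz
    obtain ⟨y, hy, hy0⟩ := hI.nz
    obtain ⟨r, hr⟩ := Pr.ne (hp := hp) hx0 hy0
    refine ⟨x * r * y, ⟨h.nzi.mr _ _ (h.nzi.mr _ _ hx), fun s => ?_⟩, hr⟩
    rw [← mul_assoc, h.mr _ _ (h.nzi.ml _ _ (h.nzi.mr _ _ hx))]
    exact hI.ml _ _ hy
  · rintro x ⟨hx, hx'⟩
    simpa using hx' 1

theorem PLin.mono {φ : R → R} {J K : Set R} (h : PLin φ J) (hK : NZI K) (hKJ : K ⊆ J) :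
    PLin φ K :=
  ⟨hK, fun x y hx hy => h.add x y (hKJ hx) (hKJ hy), fun r x hx => h.mr r x (hKJ hx)⟩

variable [Nontrivial R]

/-- Setoid of germs. -/
def pmSetoid (hp : Pr R) : Setoid (PM R) where
  r φ ψ := ∃ J : Set R, NZI J ∧ ∀ x ∈ J, φ.1 x = ψ.1 x
  iseqv := ⟨fun _ => ⟨Set.univ, NZI.univ, fun _ _ => rfl⟩,
    fun ⟨J, hJ, h⟩ => ⟨J, hJ, fun x hx => (h x hx).symm⟩,
    fun ⟨J, hJ, h⟩ ⟨K, hK, h'⟩ => ⟨J ∩ K, hJ.inter hp hK,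
      fun x hx => (h x hx.1).trans (h' x hx.2)⟩⟩

/-- Right Martindale quotient ring. -/
def MQ (hp : Pr R) : Type _ := Quotient (pmSetoid hp)

variable (hp : Pr R)

theorem PLin.comp_ex {φ ψ : R → R} {J K : Set R} (h : PLin φ J) (h' : PLin ψ K) (hp : Pr R) :
    ∃ I, PLin (fun x => φ (ψ x)) I := by
  obtain ⟨I, hI, hIK, hI'⟩ := h'.pull hp h.nzi
  refine ⟨I, hI, fun x y hx hy => ?_, fun r x hx => ?_⟩
  · rw [h'.add _ _ (hIK hx) (hIK hy), h.add _ _ (hI' _ hx) (hI' _ hy)]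
  · rw [h'.mr _ _ (hIK hx), h.mr _ _ (hI' _ hx)]

def pmAdd (hp : Pr R) (φ ψ : PM R) : PM R := ⟨fun x => φ.1 x + ψ.1 x, by
  obtain ⟨J, hJ⟩ := φ.2
  obtain ⟨K, hK⟩ := ψ.2
  refine ⟨J ∩ K, hJ.nzi.inter hp hK.nzi, fun x y hx hy => ?_, fun r x hx => ?_⟩
  · rw [hJ.add _ _ hx.1 hy.1, hK.add _ _ hx.2 hy.2]; abel
  · rw [hJ.mr _ _ hx.1, hK.mr _ _ hx.2, add_mul]⟩

def pmNeg (φ : PM R) : PM R := ⟨fun x => - φ.1 x, by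
  obtain ⟨J, hJ⟩ := φ.2
  refine ⟨J, hJ.nzi, fun x y hx hy => ?_, fun r x hx => ?_⟩
  · rw [hJ.add _ _ hx hy]; abel
  · rw [hJ.mr _ _ hx, neg_mul]⟩

def pmMul (hp : Pr R) (φ ψ : PM R) : PM R := ⟨fun x => φ.1 (ψ.1 x), by
  obtain ⟨J, hJ⟩ := φ.2
  obtain ⟨K, hK⟩ := ψ.2
  exact hJ.comp_ex hK hp⟩

def pmLeft (a : R) : PM R := ⟨fun x => a * x, Set.univ, NZI.univ,
  fun x y _ _ => mul_add a x y, fun r x _ => (mul_assoc a x r).symm⟩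

noncomputable instance : Add (MQ hp) := ⟨Quotient.map₂ (pmAdd hp) (by
  rintro φ φ' ⟨J, hJ, h⟩ ψ ψ' ⟨K, hK, h'⟩
  exact ⟨J ∩ K, hJ.inter hp hK, fun x hx => by simp only [pmAdd]; rw [h x hx.1, h' x hx.2]⟩)⟩

noncomputable instance : Neg (MQ hp) := ⟨Quotient.map pmNeg (by
  rintro φ φ' ⟨J, hJ, h⟩
  exact ⟨J, hJ, fun x hx => by simp only [pmNeg]; rw [h x hx]⟩)⟩

noncomputable instance : Mul (MQ hp) := ⟨Quotient.map₂ (pmMul hp) (by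
  rintro φ φ' ⟨J, hJ, h⟩ ψ ψ' ⟨K, hK, h'⟩
  obtain ⟨I, hI⟩ := ψ.2
  obtain ⟨I', hI', hs, hm⟩ := hI.pull hp hJ
  refine ⟨K ∩ I', hK.inter hp hI', fun x hx => ?_⟩
  simp only [pmMul]
  rw [← h' x hx.1, h _ (hm x hx.2)])⟩

noncomputable instance : Zero (MQ hp) := ⟨Quotient.mk _ (pmLeft 0)⟩
noncomputable instance : One (MQ hp) := ⟨Quotient.mk _ (pmLeft 1)⟩

theorem mq_sound {φ ψ : PM R} (h : ∀ x, φ.1 x = ψ.1 x) :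
    (Quotient.mk (pmSetoid hp) φ : MQ hp) = Quotient.mk (pmSetoid hp) ψ :=
  Quotient.sound ⟨Set.univ, NZI.univ, fun x _ => h x⟩

noncomputable instance : Ring (MQ hp) where
  add_assoc a b c := by
    induction a using Quotient.inductionOn
    induction b using Quotient.inductionOn
    induction c using Quotient.inductionOn
    exact mq_sound hp fun x => add_assoc _ _ _
  zero_add a := by
    induction a using Quotient.inductionOn
    exact mq_sound hp fun x => by simp [pmAdd, pmLeft]
  add_zero a := by
    induction a using Quotient.inductionOn
    exact mq_sound hp fun x => by simp [pmAdd, pmLeft]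
  nsmul := nsmulRec
  add_comm a b := by
    induction a using Quotient.inductionOn
    induction b using Quotient.inductionOn
    exact mq_sound hp fun x => add_comm _ _
  left_distrib a b c := by
    induction a using Quotient.inductionOn with | _ φ
    induction b using Quotient.inductionOn with | _ ψ
    induction c using Quotient.inductionOn with | _ χ
    obtain ⟨J, hJ⟩ := φ.2
    obtain ⟨K, hK⟩ := ψ.2
    obtain ⟨I, hI⟩ := χ.2
    obtain ⟨K', hK', _, hm⟩ := hK.pull hp hJ.nzi
    obtain ⟨I', hI', _, hm'⟩ := hI.pull hp hJ.nzi
    exact Quotient.sound ⟨K' ∩ I', hK'.inter hp hI', fun x hx =>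
      hJ.add _ _ (hm x hx.1) (hm' x hx.2)⟩
  right_distrib a b c := by
    induction a using Quotient.inductionOn
    induction b using Quotient.inductionOn
    induction c using Quotient.inductionOn
    exact mq_sound hp fun x => rfl
  zero_mul a := by
    induction a using Quotient.inductionOn
    exact mq_sound hp fun x => by simp [pmMul, pmLeft]
  mul_zero a := by
    induction a using Quotient.inductionOn with | _ φ
    obtain ⟨J, hJ⟩ := φ.2
    exact mq_sound hp fun x => by simp [pmMul, pmLeft, hJ.zero]
  mul_assoc a b c := by
    induction a using Quotient.inductionOn
    induction b using Quotient.inductionOn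
    induction c using Quotient.inductionOn
    exact mq_sound hp fun x => rfl
  one_mul a := by
    induction a using Quotient.inductionOn
    exact mq_sound hp fun x => by simp [pmMul, pmLeft]
  mul_one a := by
    induction a using Quotient.inductionOn
    exact mq_sound hp fun x => by simp [pmMul, pmLeft]
  zsmul := zsmulRec
  neg_add_cancel a := by
    induction a using Quotient.inductionOn
    exact mq_sound hp fun x => by simp [pmAdd, pmNeg, pmLeft]

/-- Embedding. -/
noncomputable def mqι : R →+* MQ hp where
  toFun a := Quotient.mk _ (pmLeft a)
  map_one' := rfl
  map_zero' := rfl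
  map_mul' a b := mq_sound hp fun x => mul_assoc _ _ _
  map_add' a b := mq_sound hp fun x => add_mul _ _ _

theorem mqι_inj : Function.Injective (mqι hp) := by
  intro a b hab
  obtain ⟨J, hJ, h⟩ := Quotient.exact hab
  have : a - b = 0 := hJ.left_faithful hp fun x hx => by
    have := h x hx
    simp only [pmLeft] at this
    rw [sub_mul, this, sub_self]
  exact sub_eq_zero.1 this

theorem mq_dom (q : MQ hp) : ∃ J, NZI J ∧ ∀ x ∈ J, ∃ y, q * mqι hp x = mqι hp y := by
  induction q using Quotient.inductionOn with | _ φ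
  obtain ⟨J, hJ⟩ := φ.2
  exact ⟨J, hJ.nzi, fun x hx => ⟨φ.1 x, mq_sound hp fun z => hJ.mr z x hx⟩⟩

theorem mq_faithful (q : MQ hp) (J : Set R) (hJ : NZI J) (h : ∀ x ∈ J, q * mqι hp x = 0) :
    q = 0 := by
  induction q using Quotient.inductionOn with | _ φ
  obtain ⟨K, hK⟩ := φ.2
  refine Quotient.sound ⟨J ∩ K, hJ.inter hp hK.nzi, fun x hx => ?_⟩
  obtain ⟨I, hI, h'⟩ := Quotient.exact (h x hx.1)
  have : φ.1 x = 0 := hI.left_faithful hp fun z hz => by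
    have := h' z hz
    simp only [pmMul, pmLeft, zero_mul] at this
    rw [← hK.mr _ _ hx.2]; exact this
  simp [this, pmLeft]

theorem mq_pair (a b : R) (hb : b ≠ 0) (hab : ∀ x, a * x * b = b * x * a) :
    ∃ c ∈ Subring.center (MQ hp), mqι hp a = c * mqι hp b := by
  classical
  -- relation: `y = c x`
  let Rel : R → R → Prop := fun x y => ∀ r, y * r * b = x * r * a
  have uniq : ∀ x y y', Rel x y → Rel x y' → y = y' := by
    intro x y y' h h'
    have : y - y' = 0 := by
      rcases hp (y - y') b (fun r => by rw [sub_mul, sub_mul, h, h', sub_self]) with h1 | h1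
      · exact h1
      · exact absurd h1 hb
    exact sub_eq_zero.1 this
  let D : Set R := {x | ∃ y, Rel x y}
  let φ : R → R := fun x => if h : ∃ y, Rel x y then h.choose else 0
  have hφ : ∀ x y, Rel x y → φ x = y := by
    intro x y h
    have h' : ∃ y, Rel x y := ⟨y, h⟩
    simp only [φ, dif_pos h']
    exact uniq _ _ _ h'.choose_spec h
  have radd : ∀ x x' y y', Rel x y → Rel x' y' → Rel (x + x') (y + y') := by
    intro x x' y y' h h' r
    simp only [add_mul, h r, h' r]
  have rml : ∀ s x y, Rel x y → Rel (s * x) (s * y) := by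
    intro s x y h r
    have := h r
    simp only [mul_assoc] at this ⊢
    rw [this]
  have rmr : ∀ s x y, Rel x y → Rel (x * s) (y * s) := by
    intro s x y h r
    have := h (s * r)
    simp only [mul_assoc] at this ⊢
    rw [this]
  have hDb : Rel b a := fun r => hab r
  have hD : NZI D := by
    refine ⟨?_, ?_, ?_, ⟨b, ⟨a, hDb⟩, hb⟩⟩
    · rintro x x' ⟨y, h⟩ ⟨y', h'⟩
      exact ⟨_, radd _ _ _ _ h h'⟩
    · rintro r x ⟨y, h⟩
      exact ⟨_, rml _ _ _ h⟩
    · rintro r x ⟨y, h⟩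
      exact ⟨_, rmr _ _ _ h⟩
  have hP : PLin φ D := by
    refine ⟨hD, ?_, ?_⟩
    · rintro x x' ⟨y, h⟩ ⟨y', h'⟩
      rw [hφ _ _ h, hφ _ _ h', hφ _ _ (radd _ _ _ _ h h')]
    · rintro r x ⟨y, h⟩
      rw [hφ _ _ h, hφ _ _ (rmr r _ _ h)]
  have hml : ∀ r x, x ∈ D → φ (r * x) = r * φ x := by
    rintro r x ⟨y, h⟩
    rw [hφ _ _ h, hφ _ _ (rml r _ _ h)]
  let Φ : PM R := ⟨φ, D, hP⟩
  let c : MQ hp := Quotient.mk (pmSetoid hp) Φ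
  refine ⟨c, ?_, ?_⟩
  · rw [Subring.mem_center_iff]
    intro q
    induction q using Quotient.inductionOn with | _ ψ
    obtain ⟨K, hK⟩ := ψ.2
    obtain ⟨I, hI, hIK, hI'⟩ := hK.pull hp hD
    -- compare on an ideal of elements of `I`, after multiplying by `D`
    let q : MQ hp := Quotient.mk (pmSetoid hp) ψ
    have key : q * c - c * q = 0 := by
      obtain ⟨y0, hy0⟩ := hD.nz
      apply mq_faithful hp _ (K ∩ D) (hK.nzi.inter hp hD)
      intro z hz
      apply mq_faithful hp _ D hD
      intro w hw
      rw [mul_assoc, ← map_mul, sub_mul, sub_eq_zero]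
      refine mq_sound hp fun x => ?_
      change ψ.1 (φ (z * w * x)) = φ (ψ.1 (z * w * x))
      rw [hP.mr _ _ (hD.ml _ _ hw), hml _ _ hw, mul_assoc z, hK.mr _ _ hz.1]
      rw [mul_assoc z w x, hK.mr _ _ hz.1, hml _ _ (hD.mr _ _ hw), hP.mr _ _ hw]
    exact sub_eq_zero.1 key
  · refine mq_sound hp fun x => ?_
    change a * x = φ (b * x)
    rw [hφ _ _ (rmr x _ _ hDb)]

end Q
end PC

namespace PC
open Polynomial

/-- The additive group of `p`-commutators. -/
def AA {F : Type*} [Field F] (R : Type*) [Ring R] [Algebra F R] (p : Polynomial F) :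
    AddSubgroup R :=
  AddSubgroup.closure {x : R | ∃ a b : R, x = aeval (a * b) p - aeval (b * a) p}

/-- Criterion used for part (b). -/
def CG {R : Type*} [Ring R] (A : AddSubgroup R) : Prop :=
  ∃ m : R, m ≠ 0 ∧ ∀ a b r : R, (a * m * b) * r - r * (a * m * b) ∈ A

section
variable {R : Type*} [Ring R]

theorem CG.ideal {A : AddSubgroup R} (h : CG A) :
    ∃ M : TwoSidedIdeal R, M ≠ ⊥ ∧ ∀ m ∈ M, ∀ x : R, x * m - m * x ∈ A := by
  obtain ⟨m, hm, h⟩ := h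
  let S : Set R := {m | ∀ a b r : R, (a * m * b) * r - r * (a * m * b) ∈ A}
  have h0 : (0 : R) ∈ S := by intro a b r; simp [A.zero_mem]
  have hadd : ∀ {x y}, x ∈ S → y ∈ S → x + y ∈ S := by
    intro x y hx hy a b r
    have := A.add_mem (hx a b r) (hy a b r)
    convert this using 1; noncomm_ring
  have hneg : ∀ {x}, x ∈ S → -x ∈ S := by
    intro x hx a b r
    have := A.neg_mem (hx a b r)
    convert this using 1; noncomm_ring
  have hl : ∀ {x y}, y ∈ S → x * y ∈ S := by
    intro x y hy a b r
    have := hy (a * x) b r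
    simpa only [mul_assoc] using this
  have hr : ∀ {x y}, x ∈ S → x * y ∈ S := by
    intro x y hy a b r
    have := hy a (y * b) r
    simpa only [mul_assoc] using this
  refine ⟨TwoSidedIdeal.mk' S h0 hadd hneg hl hr, ?_, ?_⟩
  · intro hb
    have : m ∈ TwoSidedIdeal.mk' S h0 hadd hneg hl hr := by
      rw [TwoSidedIdeal.mem_mk']; exact h
    rw [hb] at this
    exact hm ((TwoSidedIdeal.mem_bot R).1 this)
  · intro x hx r
    rw [TwoSidedIdeal.mem_mk'] at hx
    have := A.neg_mem (hx 1 1 r)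
    simpa using this

theorem lemK {A L : AddSubgroup R} (hLA : L ≤ A) (hL : ∀ x ∈ L, ∀ r, x * r - r * x ∈ L)
    {u v : R} (hu : u ∈ L) (hv : v ∈ L) (huv : u * v - v * u ≠ 0) : CG A := by
  have tmul : ∀ x y, (∀ r, x * r - r * x ∈ L) → (∀ r, y * r - r * y ∈ L) →
      ∀ r, x * y * r - r * (x * y) ∈ L := by
    intro x y hx hy r
    have := L.add_mem (hx (y * r)) (hy (r * x))
    convert this using 1; noncomm_ring
  have key : ∀ x r, (u * v - v * u) * x * r - r * ((u * v - v * u) * x) ∈ L := by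
    intro x r
    have h1 := hL _ (hL u hu (v * x)) r
    have h2 := tmul v (u * x - x * u) (hL v hv) (hL _ (hL u hu x)) r
    have := L.sub_mem h1 h2
    convert this using 1; noncomm_ring
  refine ⟨_, huv, fun a b r => hLA ?_⟩
  have h1 := hL _ (key b a) r
  have h2 := key (b * a) r
  have := L.sub_mem h2 h1
  convert this using 1; noncomm_ring

theorem lemK' {A L : AddSubgroup R} (hLA : L ≤ A) {S : Set R} (hS : L = AddSubgroup.closure S)
    (hL : ∀ x ∈ S, ∀ r, x * r - r * x ∈ L)
    {u v : R} (hu : u ∈ L) (hv : v ∈ L) (huv : u * v - v * u ≠ 0) : CG A := by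
  refine lemK hLA ?_ hu hv huv
  intro x hx r
  have hx2 := hx
  rw [hS] at hx2
  induction hx2 using AddSubgroup.closure_induction with
  | mem x h => exact hL x h r
  | zero => simp [L.zero_mem]
  | add x y hx' hy' h1 h2 =>
    have := L.add_mem (h1 (by rw [hS]; exact hx')) (h2 (by rw [hS]; exact hy'))
    convert this using 1; noncomm_ring
  | neg x hx' h1 =>
    have := L.neg_mem (h1 (by rw [hS]; exact hx'))
    convert this using 1; noncomm_ring
end

section
variable {F : Type*} [Field F] {R : Type*} [Ring R] [Algebra F R] (p : Polynomial F)

theorem AA_mem (a b : R) : aeval (a * b) p - aeval (b * a) p ∈ AA R p :=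
  AddSubgroup.subset_closure ⟨a, b, rfl⟩

theorem AA_le : AA R p ≤ AddSubgroup.closure {x : R | ∃ a b : R, x = a * b - b * a} := by
  rw [AA, AddSubgroup.closure_le]
  rintro x ⟨a, b, rfl⟩
  rw [aeval_eq_sum_range, aeval_eq_sum_range, ← Finset.sum_sub_distrib]
  refine AddSubgroup.sum_mem _ fun i _ => ?_
  rcases i with _ | i
  · simp [AddSubgroup.zero_mem]
  · apply AddSubgroup.subset_closure
    refine ⟨p.coeff (i + 1) • a, b * (a * b) ^ i, ?_⟩
    have : ∀ i : ℕ, b * (a * b) ^ i * a = (b * a) ^ (i + 1) := by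
      intro i
      induction i with
      | zero => simp
      | succ i ih => rw [pow_succ, pow_succ _ (i+1), ← ih]; noncomm_ring
    rw [mul_smul_comm, smul_mul_assoc, this, pow_succ', mul_assoc]

theorem conj_aeval (a : R) (t s : R) (h1 : t * s = 1) (h2 : s * t = 1) :
    aeval (t * a * s) p = t * aeval a p * s := by
  rw [aeval_eq_sum_range, aeval_eq_sum_range, Finset.mul_sum, Finset.sum_mul]
  refine Finset.sum_congr rfl fun i _ => ?_
  have : ∀ i : ℕ, (t * a * s) ^ i = t * a ^ i * s := by
    intro i
    induction i with
    | zero => simp [h1]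
    | succ i ih => rw [pow_succ, ih, pow_succ, show t * a ^ i * s * (t * a * s) = t * a ^ i * (s * t) * a * s by noncomm_ring, h2]; noncomm_ring
  rw [this, mul_smul_comm, smul_mul_assoc]

theorem AA_conj (t s : R) (h1 : t * s = 1) (h2 : s * t = 1) {x : R} (hx : x ∈ AA R p) :
    t * x * s ∈ AA R p := by
  unfold AA at hx
  induction hx using AddSubgroup.closure_induction with
  | mem x h =>
    obtain ⟨a, b, rfl⟩ := h
    have := AA_mem p (t * a * s) (t * b * s)
    rw [show t * a * s * (t * b * s) = t * a * (s * t) * b * s by noncomm_ring,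
      show t * b * s * (t * a * s) = t * b * (s * t) * a * s by noncomm_ring, h2] at this
    rw [show t * a * 1 * b * s = t * (a * b) * s by noncomm_ring,
      show t * b * 1 * a * s = t * (b * a) * s by noncomm_ring, conj_aeval p _ _ _ h1 h2,
      conj_aeval p _ _ _ h1 h2] at this
    rwa [mul_sub, sub_mul]
  | zero => simp [AddSubgroup.zero_mem]
  | add x y _ _ h h' => rw [mul_add, add_mul]; exact AddSubgroup.add_mem _ h h'
  | neg x _ h => rw [mul_neg, neg_mul]; exact AddSubgroup.neg_mem _ h

/-- Product over an idempotent. -/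
theorem aeval_idem (lam e : R) (hl : ∀ x, lam * x = x * lam) (he : e * e = e) :
    aeval (lam * e) p = algebraMap F R (p.coeff 0) + (aeval lam p - algebraMap F R (p.coeff 0)) * e := by
  induction p using Polynomial.induction_on' with
  | add f g hf hg => simp only [map_add, coeff_add, hf, hg]; noncomm_ring
  | monomial k a =>
    rcases k with _ | k
    · simp
    · have h1 : (lam * e) ^ (k + 1) = lam ^ (k + 1) * e := by
        rw [(show Commute lam e from hl e).mul_pow]
        congr 1
        exact IsIdempotentElem.pow_succ_eq k he
      simp [aeval_monomial, coeff_monomial, h1, mul_assoc]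

theorem center_root (hp : Pr R) [Nontrivial R] (n : ℕ) (hdeg : p.natDegree = n) (hn : 1 ≤ n)
    (hZ : ∃ g : Fin (n + 1) → R, Function.Injective g ∧ ∀ i, g i ∈ Subring.center R) :
    ∃ lam : R, (∀ x, lam * x = x * lam) ∧ aeval lam p - algebraMap F R (p.coeff 0) ≠ 0 := by
  classical
  obtain ⟨g, hg, hgc⟩ := hZ
  let Z := Subring.center R
  have : NoZeroDivisors Z := by
    refine ⟨fun {a b} hab => ?_⟩
    have hab' : (a : R) * b = 0 := by rw [← Subring.coe_mul, hab]; rfl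
    rcases hp a b (fun r => by
      rw [(Subring.mem_center_iff.1 b.2 (a * r)), ← mul_assoc, (Subring.mem_center_iff.1 b.2 a).symm, hab', zero_mul]) with h | h
    · left; exact Subtype.ext h
    · right; exact Subtype.ext h
  have : IsDomain Z := NoZeroDivisors.to_isDomain Z
  let alg : F →+* Z := (algebraMap F R).codRestrict Z (fun x => by
    rw [Subring.mem_center_iff]; intro y; exact (Algebra.commutes x y).symm)
  by_contra! h
  let q : Polynomial Z := (p - C (p.coeff 0)).map alg
  have hq : q ≠ 0 := by
    intro hq
    rw [Polynomial.map_eq_zero_iff alg.injective, sub_eq_zero] at hq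
    rw [hq, natDegree_C] at hdeg
    omega
  have hqd : q.natDegree ≤ n := by
    refine natDegree_map_le.trans ?_
    rw [natDegree_sub_C, hdeg]
  have hroot : ∀ i, q.IsRoot ⟨g i, hgc i⟩ := by
    intro i
    have h1 := h (g i) (fun x => (Subring.mem_center_iff.1 (hgc i) x).symm)
    rw [IsRoot, eval_map]
    apply Subtype.ext
    have : ∀ f : Polynomial F, ((f.eval₂ alg ⟨g i, hgc i⟩ : Z) : R) = aeval (g i) f := by
      intro f
      rw [show ((f.eval₂ alg ⟨g i, hgc i⟩ : Z) : R) = Z.subtype (f.eval₂ alg ⟨g i, hgc i⟩) from rfl, hom_eval₂]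
      rfl
    rw [this, map_sub, aeval_C]
    exact h1
  have hc : Fintype.card (Fin (n+1)) ≤ q.roots.toFinset.card := by
    rw [← Finset.card_univ, ← Finset.card_image_of_injective (f := fun i => (⟨g i, hgc i⟩ : Z)) Finset.univ ]
    · apply Finset.card_le_card
      intro x hx
      obtain ⟨i, _, rfl⟩ := Finset.mem_image.1 hx
      rw [Multiset.mem_toFinset, mem_roots hq]
      exact hroot i
    · intro i j hij
      exact hg (congrArg Subtype.val hij)
  have := (Multiset.toFinset_card_le q.roots).trans (card_roots' q)
  simp at hc
  omega

theorem case1 (hp : Pr R) [Nontrivial R] (n : ℕ) (hdeg : p.natDegree = n) (hn : 1 ≤ n)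
    (hZ : ∃ g : Fin (n + 1) → R, Function.Injective g ∧ ∀ i, g i ∈ Subring.center R)
    (e : R) (he : e * e = e) (he0 : e ≠ 0) (he1 : e ≠ 1) : CG (AA R p) := by
  obtain ⟨lam, hl, hc0⟩ := center_root p hp n hdeg hn hZ
  set c := aeval lam p - algebraMap F R (p.coeff 0) with hc
  have hcc : ∀ x, c * x = x * c := by
    intro x
    have : Commute lam x := hl x
    have h1 : Commute (aeval lam p) x := by
      rw [aeval_eq_sum_range]
      refine Commute.sum_left _ _ _ fun i _ => ?_
      exact (this.pow_left i).smul_left _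
    exact (h1.sub_left (Algebra.commutes _ x))
  have key : ∀ e x : R, e * e = e → c * (e * x * (1 - e)) ∈ AA R p := by
    intro e x he
    have h := AA_mem p (lam * (e + e * x * (1 - e))) e
    have h1 : (1 - e) * e = 0 := by rw [sub_mul, he, one_mul, sub_self]
    have h2 : e * (e + e * x * (1 - e)) = e + e * x * (1 - e) := by
      rw [mul_add, he, ← mul_assoc, ← mul_assoc, he]
    have h3 : (e + e * x * (1 - e)) * e = e := by
      rw [add_mul, he, mul_assoc, h1, mul_zero, add_zero]
    have h4 : (e + e * x * (1 - e)) * (e + e * x * (1 - e)) = e + e * x * (1 - e) := by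
      conv_lhs => rw [← h2, ← mul_assoc, h2, h3]
      exact h2
    rw [← mul_assoc e, ← hl e, mul_assoc lam e, h2, mul_assoc lam, h3, aeval_idem p _ _ hl he,
      aeval_idem p _ _ hl h4] at h
    have := AddSubgroup.neg_mem _ h
    rw [← hc] at this
    convert this using 1; noncomm_ring
  obtain ⟨f, hf⟩ : ∃ f, f = 1 - e := ⟨_, rfl⟩
  have hff : f * f = f := by rw [hf]; simp [mul_sub, sub_mul, he]
  have hef : e * f = 0 := by rw [hf, mul_sub, he, mul_one, sub_self]
  have hfe : f * e = 0 := by rw [hf, sub_mul, he, one_mul, sub_self]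
  have hone : e + f = 1 := by rw [hf]; abel
  have hf0 : f ≠ 0 := by rw [hf]; exact sub_ne_zero.2 (Ne.symm he1)
  have k1 : ∀ x, c * (e * x * f) ∈ AA R p := by intro x; rw [hf]; exact key e x he
  have k2 : ∀ x, c * (f * x * e) ∈ AA R p := by
    intro x
    have := key f x hff
    rwa [hf, sub_sub_cancel, ← hf] at this
  have k3 : ∀ x y, c * (e * x * f * (f * y * e) - f * y * e * (e * x * f)) ∈ AA R p := by
    intro x y
    obtain ⟨t, ht⟩ : ∃ t, t = e * x * f := ⟨_, rfl⟩
    have htt : t * t = 0 := by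
      rw [ht, show e * x * f * (e * x * f) = e * x * (f * e) * x * f by noncomm_ring, hfe]; simp
    have h := AA_conj p (1 + t) (1 - t) (by rw [show (1+t)*(1-t) = 1 - t * t by noncomm_ring, htt, sub_zero])
      (by rw [show (1-t)*(1+t) = 1 - t * t by noncomm_ring, htt, sub_zero]) (k2 y)
    have h4 := AddSubgroup.add_mem _ (AddSubgroup.sub_mem _ h (k2 y)) (k1 (x * f * y * e * x))
    have e1 : e * (x * f * y * e * x) * f = t * (f * y * e) * t := by
      rw [ht, show e * x * f * (f * y * e) * (e * x * f) = e * x * (f * f) * y * (e * e) * x * f by noncomm_ring, hff, he]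
      noncomm_ring
    rw [e1] at h4
    rw [← ht]
    convert h4 using 1
    have := hcc (1 + t)
    rw [← mul_assoc (1 + t), ← this]
    noncomm_ring
  -- Lie ideal
  let S : Set R := {z | ∃ x, z = c * (e * x * f)} ∪ {z | ∃ x, z = c * (f * x * e)} ∪
    {z | ∃ x y, z = c * (e * x * f * (f * y * e) - f * y * e * (e * x * f))}
  let L := AddSubgroup.closure S
  have hLA : L ≤ AA R p := by
    rw [AddSubgroup.closure_le]
    rintro z ((⟨x, rfl⟩ | ⟨x, rfl⟩) | ⟨x, y, rfl⟩)
    exacts [k1 x, k2 x, k3 x y]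
  have m1 : ∀ x, c * (e * x * f) ∈ L := fun x =>
    AddSubgroup.subset_closure (Or.inl (Or.inl ⟨x, rfl⟩))
  have m2 : ∀ x, c * (f * x * e) ∈ L := fun x =>
    AddSubgroup.subset_closure (Or.inl (Or.inr ⟨x, rfl⟩))
  have m3 : ∀ x y, c * (e * x * f * (f * y * e) - f * y * e * (e * x * f)) ∈ L := fun x y =>
    AddSubgroup.subset_closure (Or.inr ⟨x, y, rfl⟩)
  have b1 : ∀ x r, c * (e * x * f) * r - r * (c * (e * x * f)) ∈ L := by
    intro x r
    have h := L.add_mem (m1 (x * f * r - r * e * x)) (m3 x r)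
    convert h using 1
    rw [← mul_assoc r, ← hcc r]
    have : e * x * f * r - r * (e * x * f) = e * (x * f * r - r * e * x) * f +
        (e * x * (f * f) * r * e - f * r * (e * e) * x * f) := by
      rw [hff, he]
      have h1 : e * x * f * r = e * x * f * r * e + e * x * f * r * f := by rw [← mul_add, hone, mul_one]
      have h2 : r * (e * x * f) = (e + f) * (r * (e * x * f)) := by rw [hone, one_mul]
      rw [h2]
      conv_lhs => rw [h1]
      noncomm_ring
    rw [show c * (e * x * f) * r - c * r * (e * x * f) = c * (e * x * f * r - r * (e * x * f)) by noncomm_ring, this]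
    noncomm_ring
  have b2 : ∀ x r, c * (f * x * e) * r - r * (c * (f * x * e)) ∈ L := by
    intro x r
    have h := L.sub_mem (m2 (x * e * r - r * f * x)) (m3 r x)
    convert h using 1
    rw [← mul_assoc r, ← hcc r]
    have : f * x * e * r - r * (f * x * e) = f * (x * e * r - r * f * x) * e -
        (e * r * (f * f) * x * e - f * x * (e * e) * r * f) := by
      rw [hff, he]
      have h1 : f * x * e * r = f * x * e * r * e + f * x * e * r * f := by rw [← mul_add, hone, mul_one]
      have h2 : r * (f * x * e) = (e + f) * (r * (f * x * e)) := by rw [hone, one_mul]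
      rw [h2]
      conv_lhs => rw [h1]
      noncomm_ring
    rw [show c * (f * x * e) * r - c * r * (f * x * e) = c * (f * x * e * r - r * (f * x * e)) by noncomm_ring, this]
    noncomm_ring
  have hL : ∀ z ∈ S, ∀ r, z * r - r * z ∈ L := by
    rintro z ((⟨x, rfl⟩ | ⟨x, rfl⟩) | ⟨x, y, rfl⟩) r
    · exact b1 x r
    · exact b2 x r
    · -- z = e a e - f b f
      obtain ⟨a, ha⟩ : ∃ a, a = x * f * (f * y) := ⟨_, rfl⟩
      obtain ⟨b, hb⟩ : ∃ b, b = y * e * (e * x) := ⟨_, rfl⟩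
      rw [show e * x * f * (f * y * e) - f * y * e * (e * x * f) = e * a * e - f * b * f by
        rw [ha, hb]; noncomm_ring]
      -- [uv - vu, r] with u = e x f, v = f y e by Jacobi
      obtain ⟨u, hu⟩ : ∃ u, u = e * x * f := ⟨_, rfl⟩
      obtain ⟨v, hv⟩ : ∃ v, v = f * y * e := ⟨_, rfl⟩
      rw [show e * a * e - f * b * f = u * v - v * u by rw [ha, hb, hu, hv]; noncomm_ring]
      -- c[[u,v],r] decomposition by Peirce components of r
      have g1 : ∀ w, c * w - w * c = 0 := fun w => by rw [hcc w, sub_self]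
      have euv : e * (u * v) = u * v := by rw [hu, ← mul_assoc, ← mul_assoc, ← mul_assoc, he]
      have uve : (u * v) * e = u * v := by rw [hv, ← mul_assoc, mul_assoc _ e e, he]
      have fvu : f * (v * u) = v * u := by rw [hv, ← mul_assoc, ← mul_assoc, ← mul_assoc, hff]
      have vuf : (v * u) * f = v * u := by rw [hu, ← mul_assoc, mul_assoc _ f f, hff]
      have eu : e * u = u := by rw [hu, ← mul_assoc, ← mul_assoc, he]
      have uf : u * f = u := by rw [hu, mul_assoc _ f f, hff]
      have fv : f * v = v := by rw [hv, ← mul_assoc, ← mul_assoc, hff]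
      have ve : v * e = v := by rw [hv, mul_assoc _ e e, he]
      have fu : f * u = 0 := by rw [hu, ← mul_assoc, ← mul_assoc, hfe]; simp
      have ue : u * e = 0 := by rw [hu, mul_assoc _ f e, hfe]; simp
      have ev : e * v = 0 := by rw [hv, ← mul_assoc, ← mul_assoc, hef]; simp
      have vf : v * f = 0 := by rw [hv, mul_assoc _ e f, hef]; simp
      have J1 : c * ((u * (v * r - r * v)) - (v * r - r * v) * u) ∈ L := by
        have := b1 x (v * r - r * v)
        convert this using 1
        rw [← hu, ← mul_assoc _ c, ← hcc (v * r - r * v)]; noncomm_ring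
      have J2 : c * ((v * (u * r - r * u)) - (u * r - r * u) * v) ∈ L := by
        have := b2 y (u * r - r * u)
        convert this using 1
        rw [← hv, ← mul_assoc _ c, ← hcc (u * r - r * u)]; noncomm_ring
      have := L.sub_mem J1 J2
      convert this using 1
      rw [← mul_assoc r c, ← hcc r]; noncomm_ring
  obtain ⟨x, hx⟩ := Pr.ne (hp := hp) he0 hf0
  have hx' : e * x * f * c ≠ 0 := by
    intro h
    rcases hp (e * x * f) c (fun r => by rw [mul_assoc, ← hcc r, ← mul_assoc, h, zero_mul]) with h | h
    · exact hx h
    · exact hc0 h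
  obtain ⟨y, hy⟩ := Pr.ne (hp := hp) hx' he0
  have hy2 : e * x * f * y * e * (c * c) ≠ 0 := by
    intro h
    have h2 : e * x * f * c * y * e * c = 0 := by
      rw [← h]
      rw [show e * x * f * c * y * e * c = e * x * f * (c * (y * e)) * c by noncomm_ring, hcc]
      noncomm_ring
    rcases hp (e * x * f * c * y * e) c (fun r => by rw [mul_assoc, ← hcc r, ← mul_assoc, h2, zero_mul]) with h | h
    · exact hy h
    · exact hc0 h
  refine lemK' hLA rfl hL (m1 x) (m2 y) ?_
  intro h
  apply hy2
  have h2 := congrArg (fun z => e * z) h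
  simp only [mul_zero, mul_sub] at h2
  rw [show e * (c * (f * y * e) * (c * (e * x * f))) = 0 by
    rw [hcc (f * y * e), show e * (f * y * e * c * (c * (e * x * f))) = (e * f) * (y * e * c * (c * (e * x * f))) by noncomm_ring, hef, zero_mul], sub_zero] at h2
  rw [← h2]
  rw [hcc (e * x * f), show e * (e * x * f * c * (c * (f * y * e))) = (e * e) * x * f * ((c * c) * (f * y * e)) by noncomm_ring,
    he, mul_assoc c c, hcc (f * y * e), hcc (f * y * e * c)]
  rw [show e * x * f * (f * y * e * c * c) = e * x * (f * f) * y * e * (c * c) by noncomm_ring, hff]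
end
end PC

namespace PC
open Polynomial

section
variable {Q : Type*} [Ring Q]

/-- `PP x y n i` is the sum of all words of length `n` with `i` letters `x`, the others `y`. -/
def PP (x y : Q) : ℕ → ℕ → Q
  | 0, 0 => 1
  | 0, (_ + 1) => 0
  | (n + 1), 0 => PP x y n 0 * y
  | (n + 1), (i + 1) => PP x y n i * x + PP x y n (i + 1) * y

theorem PP_zero_right (x y : Q) (n : ℕ) : PP x y n 0 = y ^ n := by
  induction n with
  | zero => simp [PP]
  | succ n ih => rw [PP, ih, pow_succ]

theorem PP_gt (x y : Q) (n : ℕ) : ∀ i, n < i → PP x y n i = 0 := by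
  induction n with
  | zero => intro i hi; obtain ⟨j, rfl⟩ := Nat.exists_eq_succ_of_ne_zero hi.ne'; rfl
  | succ n ih =>
    intro i hi
    obtain ⟨j, rfl⟩ := Nat.exists_eq_succ_of_ne_zero (Nat.ne_zero_of_lt hi)
    rw [PP, ih j (by omega), ih _ (by omega)]; simp

theorem PP_one_succ (x y : Q) (n : ℕ) : PP x y (n + 1) 1 = y ^ n * x + PP x y n 1 * y := by
  rw [PP, PP_zero_right]

theorem PP_map {S : Type*} [Ring S] (f : S →+* Q) (x y : S) (n : ℕ) :
    ∀ i, f (PP x y n i) = PP (f x) (f y) n i := by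
  induction n with
  | zero => rintro (_ | i) <;> simp [PP]
  | succ n ih => rintro (_ | i) <;> simp [PP, ih]

theorem PP_add (x x' y : Q) (n : ℕ) : PP (x + x') y n 1 = PP x y n 1 + PP x' y n 1 := by
  induction n with
  | zero => simp [PP]
  | succ n ih => rw [PP_one_succ, PP_one_succ, PP_one_succ, ih]; noncomm_ring

theorem PP_neg (x y : Q) (n : ℕ) : PP (-x) y n 1 = -PP x y n 1 := by
  have := PP_add x (-x) y n
  rw [add_neg_cancel] at this
  have h0 : PP (0 : Q) y n 1 = 0 := by
    have := PP_add 0 0 y n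
    simpa using this
  rw [h0] at this
  exact (neg_eq_of_add_eq_zero_right this.symm).symm

theorem PP_comm (y b : Q) (n : ℕ) : PP (y * b - b * y) y n 1 = y ^ n * b - b * y ^ n := by
  induction n with
  | zero => simp [PP]
  | succ n ih => rw [PP_one_succ, ih, pow_succ]; noncomm_ring

theorem comm_PP (y z : Q) (n : ℕ) : y * PP z y n 1 - PP z y n 1 * y = y ^ n * z - z * y ^ n := by
  induction n with
  | zero => simp [PP]
  | succ n ih =>
    rw [PP_one_succ]
    rw [show y * (y ^ n * z + PP z y n 1 * y) - (y ^ n * z + PP z y n 1 * y) * y =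
      y * y ^ n * z - y ^ n * z * y + (y * PP z y n 1 - PP z y n 1 * y) * y by noncomm_ring, ih,
      ← pow_succ', pow_succ]
    noncomm_ring

theorem PP_mul_right (y z : Q) (n : ℕ) : PP (z * y) y n 1 = PP z y n 1 * y := by
  induction n with
  | zero => simp [PP]
  | succ n ih => rw [PP_one_succ, PP_one_succ, ih]; noncomm_ring

theorem PP_kill (y t : Q) (n : ℕ) : ∀ z : Q, (∀ j : ℕ, z * y ^ j * t = 0) → PP z y n 1 * t = 0 := by
  induction n with
  | zero => intro z _; simp [PP]
  | succ n ih =>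
    intro z hz
    rw [PP_one_succ, add_mul, ← PP_mul_right, ih (z * y), mul_assoc, show z * t = 0 by simpa using hz 0]
    · simp
    · intro j
      have := hz (j + 1)
      rwa [pow_succ', ← mul_assoc] at this

theorem PP_commute (x y : Q) (h : Commute x y) (n : ℕ) :
    ∀ i, PP x y n i = (n.choose i : Q) * (x ^ i * y ^ (n - i)) := by
  induction n with
  | zero => rintro (_ | i) <;> simp [PP]
  | succ n ih =>
    rintro (_ | i)
    · simp [PP_zero_right]
    · rw [PP, ih, ih, Nat.choose_succ_succ, Nat.cast_add, add_mul]
      congr 1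
      · rw [mul_assoc, mul_assoc, ← (h.pow_right (n - i)).eq, ← mul_assoc (x ^ i), ← pow_succ]
        congr 3; omega
      · by_cases hi : i + 1 ≤ n
        · rw [mul_assoc, mul_assoc, ← pow_succ, show n + 1 - (i + 1) = n - (i + 1) + 1 by omega]
        · rw [Nat.choose_eq_zero_of_lt (by omega)]; simp

variable {C : Type*} [CommRing C] [Algebra C Q]

theorem PP_expand (a b : C) (x y : Q) (n : ℕ) :
    (a • x + b • y) ^ n = ∑ i ∈ Finset.range (n + 1), (a ^ i * b ^ (n - i)) • PP x y n i := by
  induction n with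
  | zero => simp [PP]
  | succ n ih =>
    have e1 : (∑ i ∈ Finset.range (n + 1), (a ^ i * b ^ (n - i)) • PP x y n i) * (a • x) =
        ∑ i ∈ Finset.range (n + 1), (a ^ (i + 1) * b ^ (n + 1 - (i + 1))) • (PP x y n i * x) := by
      rw [Finset.sum_mul]
      refine Finset.sum_congr rfl fun i _ => ?_
      rw [smul_mul_smul_comm, Nat.add_sub_add_right]
      congr 1; ring
    have e2 : (∑ i ∈ Finset.range (n + 1), (a ^ i * b ^ (n - i)) • PP x y n i) * (b • y) =
        ∑ i ∈ Finset.range (n + 1 + 1), (a ^ i * b ^ (n + 1 - i)) • (PP x y n i * y) := by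
      rw [Finset.sum_range_succ _ (n + 1), PP_gt x y n (n + 1) (by omega), zero_mul, smul_zero, add_zero,
        Finset.sum_mul]
      refine Finset.sum_congr rfl fun i hi => ?_
      have : i ≤ n := by simpa [Nat.lt_succ_iff] using hi
      rw [smul_mul_smul_comm, show n + 1 - i = n - i + 1 by omega]
      congr 1; ring
    rw [pow_succ, ih, mul_add, e1, e2, Finset.sum_range_succ' _ (n + 1), Finset.sum_range_succ' _ (n + 1),
      ← add_assoc, ← Finset.sum_add_distrib]
    congr 1
    refine Finset.sum_congr rfl fun i _ => ?_
    rw [← smul_add, PP]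

/-- Elimination lemma. -/
theorem lemE {α : Type*} [DecidableEq α] (mu : C) (G : AddSubgroup Q) (d1 d2 : α → ℕ) (m : ℕ) (t : α) (I : Finset α) :
    t ∉ I → (∀ i ∈ I, d1 i ≤ m ∧ d2 i ≤ m) → ∀ v : α → Q,
    (∀ k1 k2, k1 ≤ m * I.card → k2 ≤ m * I.card →
      ∑ i ∈ insert t I, mu ^ (k1 * d1 i + k2 * d2 i) • v i ∈ G) →
    (∏ i ∈ I, (mu ^ (d2 i * d1 t) - mu ^ (d1 i * d2 t))) • v t ∈ G := by
  induction I using Finset.induction_on with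
  | empty =>
    intro _ _ v h
    simpa using h 0 0 (by simp) (by simp)
  | insert s I hs ih =>
    intro ht hm v h
    have hts : t ≠ s := fun h => ht (by simp [h])
    have htI : t ∉ I := fun h => ht (by simp [h])
    have := ih htI (fun i hi => hm i (by simp [hi]))
      (fun i => (mu ^ (d2 s * d1 i) - mu ^ (d1 s * d2 i)) • v i) ?_
    · rw [Finset.prod_insert hs, mul_comm, mul_smul]; exact this
    · intro k1 k2 hk1 hk2
      have hs' := hm s (by simp)
      rw [Finset.card_insert_of_notMem hs, mul_add, mul_one] at h
      have h1 := h (k1 + d2 s) k2 (by omega) (by omega)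
      have h2 := h k1 (k2 + d1 s) (by omega) (by omega)
      have h3 := G.sub_mem h1 h2
      rw [← Finset.sum_sub_distrib] at h3
      convert h3 using 1
      have e : insert t (insert s I) = insert s (insert t I) := Finset.insert_comm _ _ _
      have hs2 : s ∉ insert t I := by
        rw [Finset.mem_insert]; rintro (h | h)
        exacts [hts h.symm, hs h]
      rw [e, Finset.sum_insert hs2]
      rw [show mu ^ ((k1 + d2 s) * d1 s + k2 * d2 s) • v s - mu ^ (k1 * d1 s + (k2 + d1 s) * d2 s) • v s = 0 by
        rw [sub_eq_zero]; congr 2; ring, zero_add]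
      refine Finset.sum_congr rfl fun i _ => ?_
      rw [← mul_smul, ← sub_smul]
      congr 1
      ring

/-- A scalar with no coincidences among small powers. -/
def Good (mu : C) (B : ℕ) : Prop := ∀ a b, a ≤ B → b ≤ B → mu ^ a = mu ^ b → a = b

theorem exists_good [IsDomain C] [Infinite C] (B : ℕ) : ∃ mu : C, Good mu B := by
  classical
  let P : C[X] := ∏ ab ∈ (Finset.range (B + 1) ×ˢ Finset.range (B + 1)).filter (fun ab => ab.1 ≠ ab.2),
    (X ^ ab.1 - X ^ ab.2)
  have hP : P ≠ 0 := by
    rw [Finset.prod_ne_zero_iff]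
    intro ab hab
    rw [Finset.mem_filter] at hab
    rw [sub_ne_zero]
    intro h
    have := congrArg natDegree h
    simp only [natDegree_X_pow] at this
    exact hab.2 this
  obtain ⟨mu, hmu⟩ : ∃ mu, P.eval mu ≠ 0 := by
    by_contra! h
    exact hP (Polynomial.funext (by simpa using h))
  refine ⟨mu, fun a b ha hb hab => ?_⟩
  by_contra hne
  apply hmu
  rw [Polynomial.eval_prod]
  refine Finset.prod_eq_zero (i := (a, b)) ?_ (by simp [hab])
  simp [hne]; omega

/-- The elimination constant for linearization. -/
noncomputable def wl (mu : C) (n s : ℕ) : C :=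
  ∏ i ∈ (Finset.range (n + 1)).erase s, (mu ^ ((n - i) * s) - mu ^ (i * (n - s)))

theorem wl_ne [IsDomain C] {mu : C} {B : ℕ} (h : Good mu B) {n s : ℕ} (hs : s ≤ n) (hB : n * n ≤ B) :
    wl mu n s ≠ 0 := by
  rw [wl, Finset.prod_ne_zero_iff]
  intro i hi
  rw [Finset.mem_erase, Finset.mem_range] at hi
  rw [sub_ne_zero]
  intro he
  have := h _ _ ((Nat.mul_le_mul (Nat.sub_le n i) hs).trans hB)
    ((Nat.mul_le_mul (by omega) (Nat.sub_le n s)).trans hB) he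
  have h1 : i + (n - i) = n := by omega
  have h2 : s + (n - s) = n := by omega
  generalize n - i = u at *
  generalize n - s = w at *
  apply hi.1
  have h3 : n * s = n * i := by
    calc n * s = i * s + u * s := by rw [← h1]; ring
      _ = i * s + i * w := by rw [this]
      _ = i * n := by rw [← h2]; ring
      _ = n * i := mul_comm _ _
  rcases Nat.eq_zero_or_pos n with h0 | h0
  · omega
  · exact (Nat.eq_of_mul_eq_mul_left h0 h3).symm

theorem lin (mu : C) (G : AddSubgroup Q) (n s : ℕ) (hs : s ≤ n) (W : C) (x y : Q)
    (h : ∀ k1 k2, k1 ≤ n * n → k2 ≤ n * n → W • (mu ^ k1 • x + mu ^ k2 • y) ^ n ∈ G) :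
    (wl mu n s * W) • PP x y n s ∈ G := by
  rw [mul_smul]
  have := lemE mu G (fun i => i) (fun i => n - i) n s ((Finset.range (n + 1)).erase s) (by simp)
    (by intro i hi; rw [Finset.mem_erase, Finset.mem_range] at hi; omega)
    (fun i => W • PP x y n i) ?_
  · exact this
  · have hc : ((Finset.range (n + 1)).erase s).card = n := by
      rw [Finset.card_erase_of_mem (by simp; omega)]; simp
    rw [hc]
    intro k1 k2 hk1 hk2
    have := h k1 k2 hk1 hk2
    rw [PP_expand, Finset.smul_sum] at this
    rw [Finset.insert_erase (by simp; omega)]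
    convert this using 1
    refine Finset.sum_congr rfl fun i _ => ?_
    rw [← mul_smul, ← mul_smul]
    congr 1
    ring
end
end PC

namespace PC
open Polynomial

/-- Abstract properties of the extended centroid. -/
structure Ext (C : Type*) {R Q : Type*} [Ring R] [Ring Q] [CommRing C] [Algebra C Q]
    (f : R →+* Q) : Prop where
  inj : Function.Injective f
  dom : ∀ c : C, ∃ J, NZI J ∧ ∀ x ∈ J, ∃ y, c • f x = f y
  nz : ∀ (c : C) (x : R), c • f x = 0 → c = 0 ∨ x = 0

section
variable {R Q C : Type*} [Ring R] [Nontrivial R] [Ring Q] [CommRing C] [Algebra C Q] {f : R →+* Q}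

theorem Ext.scale (h : Ext C f) (hp : Pr R) (S : Finset C) {J : Set R} (hJ : NZI J) :
    ∃ J', NZI J' ∧ J' ⊆ J ∧ ∀ x ∈ J', ∀ c ∈ S, ∃ y ∈ J, c • f x = f y := by
  classical
  have h1 : ∃ D, NZI D ∧ ∀ x ∈ D, ∀ c ∈ S, ∃ y, c • f x = f y := by
    induction S using Finset.induction_on with
    | empty => exact ⟨Set.univ, NZI.univ, by simp⟩
    | insert a S ha ih =>
      obtain ⟨D, hD, hD'⟩ := ih
      obtain ⟨E, hE, hE'⟩ := h.dom a
      refine ⟨E ∩ D, hE.inter hp hD, fun x hx c hc => ?_⟩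
      rcases Finset.mem_insert.1 hc with rfl | hc
      · exact hE' x hx.1
      · exact hD' x hx.2 c hc
  obtain ⟨D, hD, hD'⟩ := h1
  refine ⟨{x | x ∈ J ∧ ∀ c ∈ S, ∃ y ∈ J, c • f x = f y}, ⟨?_, ?_, ?_, ?_⟩, fun x hx => hx.1,
    fun x hx => hx.2⟩
  · rintro x y ⟨hx, hx'⟩ ⟨hy, hy'⟩
    refine ⟨hJ.add _ _ hx hy, fun c hc => ?_⟩
    obtain ⟨u, hu, e⟩ := hx' c hc
    obtain ⟨v, hv, e'⟩ := hy' c hc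
    exact ⟨u + v, hJ.add _ _ hu hv, by rw [map_add, smul_add, e, e', map_add]⟩
  · rintro r x ⟨hx, hx'⟩
    refine ⟨hJ.ml _ _ hx, fun c hc => ?_⟩
    obtain ⟨u, hu, e⟩ := hx' c hc
    exact ⟨r * u, hJ.ml _ _ hu, by rw [map_mul, map_mul, ← e, mul_smul_comm]⟩
  · rintro r x ⟨hx, hx'⟩
    refine ⟨hJ.mr _ _ hx, fun c hc => ?_⟩
    obtain ⟨u, hu, e⟩ := hx' c hc
    exact ⟨u * r, hJ.mr _ _ hu, by rw [map_mul, map_mul, ← e, smul_mul_assoc]⟩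
  · obtain ⟨x, hx, hx0⟩ := hD.nz
    obtain ⟨y, hy, hy0⟩ := hJ.nz
    obtain ⟨r, hr⟩ := Pr.ne (hp := hp) hx0 hy0
    refine ⟨x * r * y, ⟨hJ.ml _ _ hy, fun c hc => ?_⟩, hr⟩
    obtain ⟨u, e⟩ := hD' x hx c hc
    exact ⟨u * r * y, hJ.ml _ _ hy, by simp only [map_mul]; rw [← e, smul_mul_assoc, smul_mul_assoc]⟩

/-- scaling by small powers of `mu`. -/
theorem Ext.scalePow (h : Ext C f) (hp : Pr R) (mu : C) (B : ℕ) {J : Set R} (hJ : NZI J) :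
    ∃ J', NZI J' ∧ J' ⊆ J ∧ ∀ x ∈ J', ∀ k ≤ B, ∃ y ∈ J, mu ^ k • f x = f y := by
  classical
  obtain ⟨J', h1, h2, h3⟩ := h.scale hp ((Finset.range (B + 1)).image (fun k => mu ^ k)) hJ
  exact ⟨J', h1, h2, fun x hx k hk => h3 x hx _ (Finset.mem_image_of_mem _ (by simp; omega))⟩

variable [IsDomain C]

theorem levitzki (h : Ext C f) (hp : Pr R) {mu : C} {B : ℕ} (hg : Good mu B) (k : ℕ) :
    k * k ≤ B → ∀ J : Set R, NZI J → ∀ t : R, (∀ r ∈ J, (t * r) ^ k * t = 0) → t = 0 := by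
  induction k with
  | zero =>
    intro _ J hJ t ht
    simpa using ht 0 hJ.zero
  | succ k ih =>
    intro hk J hJ t ht
    obtain ⟨J', hJ', hs, hsc⟩ := h.scalePow hp mu B hJ
    have key : ∀ r0 ∈ J', ∀ r ∈ J', PP (t * r) (t * r0) (k + 1) 1 * t = 0 := by
      intro r0 hr0 r hr
      let G : AddSubgroup Q := (AddMonoidHom.mulRight (f t)).ker
      have := lin mu G (k + 1) 1 (by omega) 1 (f (t * r)) (f (t * r0)) ?_
      · have h2 : (wl mu (k + 1) 1 * 1) • PP (f (t * r)) (f (t * r0)) (k + 1) 1 * f t = 0 := this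
        rw [← PP_map, smul_mul_assoc, ← map_mul] at h2
        rcases h.nz _ _ h2 with h3 | h3
        · rw [mul_one] at h3
          exact absurd h3 (wl_ne hg (by omega) hk)
        · exact h3
      · intro k1 k2 hk1 hk2
        obtain ⟨u, hu, e⟩ := hsc r hr k1 (by omega)
        obtain ⟨v, hv, e'⟩ := hsc r0 hr0 k2 (by omega)
        change (1 : C) • (mu ^ k1 • f (t * r) + mu ^ k2 • f (t * r0)) ^ (k + 1) * f t = 0
        have := ht (u + v) (hJ.add _ _ hu hv)
        rw [one_smul, map_mul, map_mul, ← mul_smul_comm, ← mul_smul_comm, e, e', ← mul_add,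
          ← map_add, ← map_mul, ← map_pow, ← map_mul, this, map_zero]
    apply ih ((Nat.mul_le_mul (by omega) (by omega)).trans hk) J' hJ' t
    intro r0 hr0
    have h0 : ∀ r ∈ J', ((t * r0) ^ k * t) * r * ((t * r0) ^ k * t) = 0 := by
      intro r hr
      have h1 := key r0 hr0 (r * (t * r0) ^ k) (hJ'.mr _ _ hr)
      have h2 := ht r0 (hs hr0)
      rw [PP_one_succ, add_mul, ← PP_mul_right, PP_kill] at h1
      · rw [add_zero] at h1
        rw [← h1]; noncomm_ring
      · intro j
        have : (t * (r * (t * r0) ^ k)) * (t * r0) * (t * r0) ^ j * t =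
          t * r * (t * r0) ^ j * ((t * r0) ^ (k + 1) * t) := by
          rw [show (t * (r * (t * r0) ^ k)) * (t * r0) * (t * r0) ^ j * t =
            t * r * ((t * r0) ^ k * (t * r0) * (t * r0) ^ j) * t by noncomm_ring, ← pow_succ, ← pow_add,
            add_comm, pow_add]
          noncomm_ring
        rw [this, h2, mul_zero]
    rcases hJ'.prime hp h0 with h | h <;> exact h

theorem add_pow_char {S : Type*} [Ring S] {m : ℕ} (hm : 1 ≤ m)
    (hc : ∀ i, 0 < i → i < m → ((m.choose i : ℕ) : S) = 0) {a b : S} (hab : Commute a b) :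
    (a + b) ^ m = a ^ m + b ^ m := by
  obtain ⟨k, rfl⟩ : ∃ k, m = k + 1 := ⟨m - 1, by omega⟩
  rw [hab.add_pow, Finset.sum_range_succ, Finset.sum_range_succ', Finset.sum_eq_zero]
  · simp [add_comm]
  · intro i hi
    rw [Finset.mem_range] at hi
    rw [hc (i + 1) (by omega) (by omega), mul_zero]

theorem powcentral_false (h : Ext C f) (hp : Pr R) {mu : C} {B : ℕ} (hg : Good mu B) (n : ℕ)
    (hn : 1 ≤ n) (hB : n * n ≤ B) (hnc : ∃ a b : R, a * b ≠ b * a) {J : Set R} (hJ : NZI J)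
    (hJc : ∀ y ∈ J, ∀ s, y ^ n * s = s * y ^ n) : False := by
  have hJred : ∀ t ∈ J, t * t = 0 → t = 0 := by
    intro t ht htt
    apply levitzki h hp hg n hB Set.univ NZI.univ t
    intro r _
    rw [hJc (t * r) (hJ.mr _ _ ht)]
    obtain ⟨k, rfl⟩ : ∃ k, n = k + 1 := ⟨n - 1, by omega⟩
    rw [pow_succ', ← mul_assoc, ← mul_assoc, htt]; simp
  have hred : ∀ s : R, s * s = 0 → s = 0 := by
    intro s hs
    have : ∀ j ∈ J, s * j * s = 0 := by
      intro j hj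
      apply hJred _ (hJ.mr _ _ (hJ.ml _ _ hj))
      rw [show s * j * s * (s * j * s) = s * j * (s * s) * j * s by noncomm_ring, hs]; simp
    rcases hJ.prime hp this with h | h <;> exact h
  have hdom : ∀ a b : R, a * b = 0 → a = 0 ∨ b = 0 := by
    intro a b hab
    have := hp b a (fun r => hred _ (by
      rw [show b * r * a * (b * r * a) = b * r * (a * b) * r * a by noncomm_ring, hab]; simp))
    exact this.symm
  haveI : NoZeroDivisors R := ⟨fun {a b} => hdom a b⟩
  -- from an ideal to the whole ring
  have toall : ∀ m : ℕ, (∀ K : Set R, NZI K → (∀ y ∈ K, ∀ s, y ^ m * s = s * y ^ m) → ∀ r s : R, r ^ m * s = s * r ^ m) := by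
    intro m K hK hKc r s
    obtain ⟨y0, hy0, hy0'⟩ := (hK.inter hp hJ).nz
    let z := y0 ^ n
    have hz0 : z ≠ 0 := pow_ne_zero _ hy0'
    have hzc : ∀ s, z * s = s * z := hJc _ hy0.2
    have hzK : z ∈ K := by
      obtain ⟨k, rfl⟩ : ∃ k, n = k + 1 := ⟨n - 1, by omega⟩
      exact (show z = y0 ^ k * y0 from pow_succ _ _) ▸ hK.ml _ _ hy0.1
    have h1 := hKc (z * r) (hK.mr _ _ hzK) s
    have h2 : (z * r) ^ m = z ^ m * r ^ m := (show Commute z r from hzc r).mul_pow m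
    have h3 : z ^ m * s = s * z ^ m := ((show Commute z s from hzc s).pow_left m)
    rw [h2, ← mul_assoc s, ← h3, mul_assoc, mul_assoc] at h1
    exact mul_left_cancel₀ (pow_ne_zero m hz0) h1
  have hex : ∃ m, 1 ≤ m ∧ ∀ r s : R, r ^ m * s = s * r ^ m := ⟨n, hn, toall n J hJ hJc⟩
  classical
  let m := Nat.find hex
  obtain ⟨hm1, hmc⟩ : 1 ≤ m ∧ ∀ r s : R, r ^ m * s = s * r ^ m := Nat.find_spec hex
  have hmmin : ∀ i, i < m → 1 ≤ i → ¬ ∀ r s : R, r ^ i * s = s * r ^ i := fun i hi h1 h2 =>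
    Nat.find_min hex hi ⟨h1, h2⟩
  have hmn : m ≤ n := Nat.find_min' hex ⟨hn, toall n J hJ hJc⟩
  have hm2 : m ≠ 1 := by
    intro h1
    obtain ⟨a, b, hab⟩ := hnc
    exact hab (by have := hmc a b; simpa [h1] using this)
  have hmB : m * m ≤ B := (Nat.mul_le_mul hmn hmn).trans hB
  obtain ⟨J', hJ', hs, hsc⟩ := h.scalePow hp mu B (NZI.univ (R := R))
  have hch : ∀ i, 0 < i → i < m → ((m.choose i : ℕ) : R) = 0 := by
    intro i hi him
    by_contra hne
    refine hmmin i him hi (toall i J' hJ' ?_)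
    intro x hx s
    obtain ⟨y0, hy0, hy0'⟩ := hJ'.nz
    let z := y0 ^ m
    have hz0 : z ≠ 0 := pow_ne_zero _ hy0'
    have hzc : ∀ s, z * s = s * z := hmc _
    have hzK : z ∈ J' := by
      obtain ⟨k, hk⟩ : ∃ k, m = k + 1 := ⟨m - 1, by omega⟩
      exact (show z = y0 ^ k * y0 by rw [← pow_succ, ← hk]) ▸ hJ'.ml _ _ hy0
    let G : AddSubgroup Q := (AddMonoidHom.mulRight (f s) - AddMonoidHom.mulLeft (f s)).ker
    have h1 := lin mu G m i him.le 1 (f x) (f z) ?_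
    · have h2 : ((wl mu m i * 1) • PP (f x) (f z) m i) * f s - f s * ((wl mu m i * 1) • PP (f x) (f z) m i) = 0 := h1
      rw [← PP_map, smul_mul_assoc, mul_smul_comm, ← smul_sub, ← map_mul, ← map_mul, ← map_sub] at h2
      rcases h.nz _ _ h2 with h3 | h3
      · rw [mul_one] at h3
        exact absurd h3 (wl_ne hg him.le hmB)
      · rw [PP_commute x z (show Commute x z from (hzc x).symm)] at h3
        have h4 : z ^ (m - i) * s = s * z ^ (m - i) := ((show Commute z s from hzc s).pow_left _)
        have h5 : ((m.choose i : ℕ) : R) * ((x ^ i * s - s * x ^ i) * z ^ (m - i)) = 0 := by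
          rw [← h3]
          have h6 := Nat.cast_commute (m.choose i) s
          rw [← mul_assoc s, ← h6.eq, mul_assoc, mul_assoc, mul_assoc _ s, ← mul_sub, h4]
          congr 1
          noncomm_ring
        rcases hdom _ _ h5 with h6 | h6
        · exact absurd h6 hne
        · rcases hdom _ _ h6 with h7 | h7
          · exact sub_eq_zero.1 h7
          · exact absurd h7 (pow_ne_zero _ hz0)
    · intro k1 k2 hk1 hk2
      obtain ⟨u, -, e⟩ := hsc x hx k1 (by omega)
      obtain ⟨v, -, e'⟩ := hsc z hzK k2 (by omega)
      change (1 : C) • (mu ^ k1 • f x + mu ^ k2 • f z) ^ m * f s - f s * ((1 : C) • (mu ^ k1 • f x + mu ^ k2 • f z) ^ m) = 0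
      rw [one_smul, e, e', ← map_add, ← map_pow, ← map_mul, ← map_mul, hmc, sub_self]
  -- additivity of power
  obtain ⟨x, b, hxb⟩ := hnc
  have hneg : (1 : R) + (-1) ^ m = 0 := by
    have := add_pow_char hm1 hch (Commute.one_left (-1 : R))
    rw [add_neg_cancel, zero_pow (by omega), one_pow] at this
    exact this.symm
  let D : Module.End ℤ R := LinearMap.mulLeft ℤ x - LinearMap.mulRight ℤ x
  have hD : ∀ y, D y = x * y - y * x := fun y => rfl
  have hDm : D ^ m = 0 := by
    have hc2 : ∀ i, 0 < i → i < m → ((m.choose i : ℕ) : Module.End ℤ R) = 0 := by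
      intro i h1 h2
      ext y
      rw [Module.End.natCast_apply, ← Nat.cast_smul_eq_nsmul R, hch i h1 h2]; simp
    have := add_pow_char hm1 hc2 (a := LinearMap.mulLeft ℤ x) (b := -LinearMap.mulRight ℤ x)
      ((LinearMap.commute_mulLeft_right (R := ℤ) (A := R) x x).neg_right)
    rw [← sub_eq_add_neg] at this
    change D ^ m = _ at this
    rw [this]
    ext y
    rw [neg_pow]
    have e1 : (LinearMap.mulLeft ℤ x) ^ m = LinearMap.mulLeft ℤ (x ^ m) := by
      rw [LinearMap.pow_mulLeft]
    have e2 : (LinearMap.mulRight ℤ x) ^ m = LinearMap.mulRight ℤ (x ^ m) := by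
      rw [LinearMap.pow_mulRight]
    rw [e1, e2]
    have e3 : ((-1 : Module.End ℤ R) ^ m) = (((-1) ^ m : ℤ) : Module.End ℤ R) := by simp
    rw [e3, LinearMap.add_apply, Module.End.mul_apply, Module.End.intCast_apply, LinearMap.mulLeft_apply,
      LinearMap.mulRight_apply, LinearMap.zero_apply, ← hmc, zsmul_eq_mul]
    push_cast
    rw [← one_add_mul, hneg, zero_mul]
  -- find t
  have hexj : ∃ j, (D ^ j) b = 0 := ⟨m, by rw [hDm]; rfl⟩
  let j := Nat.find hexj
  have hj : (D ^ j) b = 0 := Nat.find_spec hexj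
  have hjmin : ∀ i, i < j → (D ^ i) b ≠ 0 := fun i hi => Nat.find_min hexj hi
  have hj2 : 2 ≤ j := by
    by_contra hlt
    have : j = 0 ∨ j = 1 := by omega
    rcases this with h0 | h0 <;> rw [h0] at hj
    · rw [pow_zero] at hj
      change b = 0 at hj
      exact hxb (by rw [hj]; simp)
    · rw [pow_one, hD] at hj
      exact hxb (sub_eq_zero.1 hj)
  obtain ⟨i, hi⟩ : ∃ i, j = i + 2 := ⟨j - 2, by omega⟩
  let t := (D ^ i) b
  obtain ⟨z, hz⟩ : ∃ z, z = x * t - t * x := ⟨_, rfl⟩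
  have hz1 : z = (D ^ (i + 1)) b := by rw [pow_succ', Module.End.mul_apply, hD, hz]
  have hz0 : z ≠ 0 := by rw [hz1]; exact hjmin _ (by omega)
  have hxz : x * z - z * x = 0 := by
    rw [hi, pow_succ', Module.End.mul_apply, hD, ← hz1] at hj
    exact hj
  have hxz' : Commute x z := sub_eq_zero.1 hxz
  let s := t * x * z ^ (m - 1)
  have hxs : x * s = (s + z ^ m) * x := by
    have e : z ^ m = z * z ^ (m - 1) := by rw [← pow_succ']; congr 1; omega
    have e2 : x * z ^ (m - 1) = z ^ (m - 1) * x := hxz'.pow_right _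
    have e3 : x * t = t * x + z := by rw [hz]; abel
    change x * (t * x * z ^ (m - 1)) = (t * x * z ^ (m - 1) + z ^ m) * x
    rw [e, add_mul, mul_assoc _ _ x, mul_assoc z, ← e2, ← mul_assoc, ← mul_assoc, e3]
    noncomm_ring
  have hxs2 : ∀ k : ℕ, x * s ^ k = (s + z ^ m) ^ k * x := by
    intro k
    induction k with
    | zero => simp
    | succ k ih => rw [pow_succ, ← mul_assoc, ih, mul_assoc, hxs, ← mul_assoc, ← pow_succ]
  have hfin := hxs2 m
  rw [add_pow_char hm1 hch (show Commute s (z ^ m) from (hmc z s).symm), add_mul, hmc s x] at hfin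
  have hfin2 : (z ^ m) ^ m * x = 0 := by simpa using hfin
  rcases hdom _ _ hfin2 with h1 | h1
  · exact pow_ne_zero _ (pow_ne_zero _ hz0) h1
  · exact hxb (by rw [h1]; simp)
end
end PC

namespace PC
open Polynomial

section
variable {F : Type*} [Field F] {R Q C : Type*} [Ring R] [Nontrivial R] [Algebra F R] [Ring Q] [CommRing C]
  [Algebra C Q] {f : R →+* Q}

theorem stageA_expand (p : F[X]) (n : ℕ) (hdeg : p.natDegree = n) (a b : C) (y be : Q) (u v : R)
    (hu : a • y = f u) (hv : b • be = f v) :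
    f (aeval (u * (1 + v)) p - aeval ((1 + v) * u) p) =
      ∑ i ∈ Finset.Icc 1 n ×ˢ Finset.range (n + 1), (a ^ i.1 * b ^ i.2) •
        (f (algebraMap F R (p.coeff i.1)) * (PP (y * be) y i.1 i.2 - PP (be * y) y i.1 i.2)) := by
  have ex : ∀ i ≤ n, ∀ w : Q, (a • (b • w + y)) ^ i =
      ∑ k ∈ Finset.range (n + 1), (a ^ i * b ^ k) • PP w y i k := by
    intro i hi w
    rw [_root_.smul_pow]
    have := PP_expand b 1 w y i
    rw [one_smul] at this
    rw [this, Finset.smul_sum]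
    have hsub : Finset.range (i + 1) ⊆ Finset.range (n + 1) := by
      intro k; simp; omega
    rw [← Finset.sum_subset hsub]
    · refine Finset.sum_congr rfl fun k _ => ?_
      rw [one_pow, mul_one, mul_smul]
    · intro k _ hk
      rw [PP_gt _ _ _ _ (by simpa using hk), smul_zero]
  have e1 : f (u * (1 + v)) = a • (b • (y * be) + y) := by
    rw [map_mul, map_add, map_one, ← hu, ← hv, mul_add, mul_one, smul_mul_assoc, mul_smul_comm, smul_add, add_comm]
  have e2 : f ((1 + v) * u) = a • (b • (be * y) + y) := by
    rw [map_mul, map_add, map_one, ← hu, ← hv, add_mul, one_mul, mul_smul_comm, smul_mul_assoc, smul_add, add_comm]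
  rw [aeval_eq_sum_range, aeval_eq_sum_range, hdeg, ← Finset.sum_sub_distrib, Finset.sum_range_succ',
    pow_zero, pow_zero, sub_self, add_zero, map_sum, Finset.sum_product]
  rw [← Finset.sum_image (s := Finset.range n) (g := fun i => i + 1)
    (f := fun i => f (p.coeff i • (u * (1 + v)) ^ i - p.coeff i • ((1 + v) * u) ^ i)) (by intro x _ y _ h; simpa using h)]
  have him : (Finset.range n).image (fun i => i + 1) = Finset.Icc 1 n := by
    ext k; simp only [Finset.mem_image, Finset.mem_range, Finset.mem_Icc]
    constructor
    · rintro ⟨a, ha, rfl⟩; omega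
    · intro h; exact ⟨k - 1, by omega, by omega⟩
  rw [him]
  refine Finset.sum_congr rfl fun i hi => ?_
  rw [Finset.mem_Icc] at hi
  rw [← smul_sub, Algebra.smul_def, map_mul, map_sub, map_pow, map_pow, e1, e2, ex i hi.2, ex i hi.2,
    ← Finset.sum_sub_distrib, Finset.mul_sum]
  refine Finset.sum_congr rfl fun k _ => ?_
  rw [← smul_sub, mul_smul_comm]

variable [IsDomain C]

theorem stageA (h : Ext C f) (hp : Pr R) (p : F[X]) (n : ℕ) (hdeg : p.natDegree = n) (hn : 1 ≤ n)
    {mu : C} {B : ℕ} (hg : Good mu B) (hB : n * (n * (n + 1)) ≤ B) :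
    ∃ J, NZI J ∧ ∃ W : C, W ≠ 0 ∧ ∀ y ∈ J, ∀ be ∈ J,
      ∃ z ∈ AA R p, W • f (y ^ n * be - be * y ^ n) = f z := by
  obtain ⟨J, hJ, -, hsc⟩ := h.scalePow hp mu B (NZI.univ (R := R))
  let I : Finset (ℕ × ℕ) := (Finset.Icc 1 n ×ˢ Finset.range (n + 1)).erase (n, 1)
  have ht : (n, 1) ∈ Finset.Icc 1 n ×ˢ Finset.range (n + 1) := by simp; omega
  have hIc : I.card ≤ n * (n + 1) := by
    refine (Finset.card_le_card (Finset.erase_subset _ _)).trans ?_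
    simp
  have hn2 : n ≤ B := by nlinarith
  refine ⟨J, hJ, ∏ i ∈ I, (mu ^ (i.2 * n) - mu ^ (i.1 * 1)), ?_, ?_⟩
  · rw [Finset.prod_ne_zero_iff]
    rintro ⟨i, k⟩ hi
    simp only [I, Finset.mem_erase, Finset.mem_product, Finset.mem_Icc, Finset.mem_range, ne_eq, Prod.mk.injEq] at hi
    rw [sub_ne_zero]
    intro he
    have := hg _ _ (by simp only; nlinarith) (by simp only; omega) he
    simp only [mul_one] at this
    rcases k with _ | _ | k
    · omega
    · apply hi.1; omega
    · have : i > n := by nlinarith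
      omega
  · intro y hy be hbe
    let bk : R := algebraMap F R (p.coeff n)⁻¹ * be
    have hpn : p.coeff n ≠ 0 := by
      rw [← hdeg]
      have : p ≠ 0 := by rintro rfl; simp at hdeg; omega
      simpa using this
    have hbk : algebraMap F R (p.coeff n) * (y ^ n * bk - bk * y ^ n) = y ^ n * be - be * y ^ n := by
      have e : algebraMap F R (p.coeff n) * bk = be := by
        rw [← mul_assoc, ← map_mul, mul_inv_cancel₀ hpn, map_one, one_mul]
      rw [mul_sub, ← mul_assoc, Algebra.commutes, mul_assoc, e, ← mul_assoc, e]
    have hbkJ : bk ∈ J := hJ.ml _ _ hbe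
    have key := lemE mu ((AA R p).map f.toAddMonoidHom) (fun i : ℕ × ℕ => i.1) (fun i => i.2) n (n, 1) I
      (by simp [I]) ?_
      (fun i => (f (algebraMap F R (p.coeff i.1)) * (PP (f y * f bk) (f y) i.1 i.2 - PP (f bk * f y) (f y) i.1 i.2))) ?_
    · obtain ⟨z, hz, hz'⟩ := key
      refine ⟨z, hz, ?_⟩
      change f z = _ at hz'
      rw [hz']
      simp only
      congr 1
      rw [← hbk]
      simp only [map_mul, map_sub, map_pow]
      rw [← PP_comm]
      rw [sub_eq_add_neg, sub_eq_add_neg, PP_add, PP_neg]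
    · rintro ⟨i, k⟩ hi
      simp only [I, Finset.mem_erase, Finset.mem_product, Finset.mem_Icc, Finset.mem_range, ne_eq, Prod.mk.injEq] at hi
      simp only; omega
    · intro k1 k2 hk1 hk2
      have hle : n * I.card ≤ B := (Nat.mul_le_mul_left n hIc).trans hB
      obtain ⟨u, -, hu⟩ := hsc y hy k1 (by omega)
      obtain ⟨v, -, hv⟩ := hsc bk hbkJ k2 (by omega)
      refine ⟨_, AA_mem p u (1 + v), ?_⟩
      change f _ = _
      rw [stageA_expand p n hdeg _ _ (f y) (f bk) u v hu hv]
      rw [Finset.insert_erase ht]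
      refine Finset.sum_congr rfl fun i _ => ?_
      congr 1
      ring

theorem case2 (h : Ext C f) [Infinite C] (hp : Pr R) (p : F[X]) (n : ℕ) (hdeg : p.natDegree = n) (hn : 1 ≤ n)
    (hnc : ∃ a b : R, a * b ≠ b * a) : CG (AA R p) := by
  obtain ⟨mu, hg⟩ := exists_good (C := C) (n * (n * (n + 1)))
  set B := n * (n * (n + 1)) with hBdef
  have hB : n * n ≤ B := by rw [hBdef]; nlinarith
  obtain ⟨JA, hJA, W1, hW1, hA⟩ := stageA h hp p n hdeg hn hg le_rfl
  -- the subring T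
  let A := AA R p
  let T : Subring R :=
    { carrier := {v | ∀ j ∈ JA, v * j - j * v ∈ A}
      mul_mem' := by
        intro v w hv hw j hj
        have := A.add_mem (hv (w * j) (hJA.ml _ _ hj)) (hw (j * v) (hJA.mr _ _ hj))
        convert this using 1; noncomm_ring
      one_mem' := by intro j _; simp [A.zero_mem]
      add_mem' := by
        intro v w hv hw j hj
        have := A.add_mem (hv j hj) (hw j hj)
        convert this using 1; noncomm_ring
      zero_mem' := by intro j _; simp [A.zero_mem]
      neg_mem' := by
        intro v hv j hj
        have := A.neg_mem (hv j hj)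
        convert this using 1; noncomm_ring }
  let TQ : Subring Q := T.map f
  have memTQ : ∀ q, q ∈ TQ ↔ ∃ v ∈ T, f v = q := fun q => Iff.rfl
  -- J_B0
  obtain ⟨JB0, hJB0, hB0s, hB0sc⟩ := h.scale hp {W1} hJA
  have hW1T : ∀ y ∈ JB0, W1 • f y ^ n ∈ TQ := by
    intro y hy
    obtain ⟨u, hu, e⟩ := hB0sc y hy W1 (by simp)
    obtain ⟨k, rfl⟩ : ∃ k, n = k + 1 := ⟨n - 1, by omega⟩
    have e2 : W1 • f y ^ (k + 1) = f (u * y ^ k) := by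
      rw [pow_succ', ← smul_mul_assoc, e, map_mul, map_pow]
    refine ⟨u * y ^ k, ?_, e2.symm⟩
    intro j hj
    obtain ⟨z, hz, ez⟩ := hA y (hB0s hy) j hj
    have : u * y ^ k * j - j * (u * y ^ k) = z := by
      apply h.inj
      rw [← ez, map_sub, map_mul f _ j, map_mul f j, ← e2]
      simp only [map_sub, map_mul, map_pow, smul_sub, smul_mul_assoc, mul_smul_comm]
    rw [this]; exact hz
  obtain ⟨JB, hJB, hBs, hBsc⟩ := h.scalePow hp mu B hJB0
  set wB := wl mu n 1 with hwB
  have hwB0 : wB ≠ 0 := wl_ne hg hn hB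
  set W2 := wB * W1 with hW2
  have hW20 : W2 ≠ 0 := mul_ne_zero hwB0 hW1
  have hD : ∀ x ∈ JB, ∀ y ∈ JB, W2 • f (PP x y n 1) ∈ TQ := by
    intro x hx y hy
    rw [PP_map]
    refine lin mu TQ.toAddSubgroup n 1 hn W1 (f x) (f y) ?_
    intro k1 k2 hk1 hk2
    obtain ⟨u, hu, e⟩ := hBsc x hx k1 (by omega)
    obtain ⟨v, hv, e'⟩ := hBsc y hy k2 (by omega)
    rw [e, e', ← map_add]
    exact hW1T _ (hJB0.add _ _ hu hv)
  have hcm : ∀ y ∈ JB, ∀ r ∈ JB, W2 • f (y ^ n * r - r * y ^ n) ∈ TQ := by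
    intro y hy r hr
    rw [← PP_comm]
    exact hD _ (hJB.sub (hJB.ml _ _ hr) (hJB.mr _ _ hr)) _ hy
  have hK : ∀ v ∈ T, ∀ y ∈ JB, ∀ x ∈ JB, W2 • f ((y ^ n * v - v * y ^ n) * x) ∈ TQ := by
    intro v hv y hy x hx
    have h1 := hcm y hy (v * x) (hJB.ml _ _ hx)
    have h2 := TQ.mul_mem (show f v ∈ TQ from ⟨v, hv, rfl⟩) (hcm y hy x hx)
    have := TQ.sub_mem h1 h2
    rw [mul_smul_comm, ← map_mul, ← smul_sub, ← map_sub] at this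
    convert this using 3; noncomm_ring
  obtain ⟨JC, hJC, hCs, hCsc⟩ := h.scale hp {wB} hJB
  have hbig : ∀ y ∈ JC, ∀ z ∈ JC, ∀ r ∈ JC, ∀ x ∈ JC,
      (W2 * W2) • f (r * (y ^ n * z ^ n - z ^ n * y ^ n) * x) ∈ TQ := by
    intro y hy z hz r hr x hx
    set u := y ^ n with hu
    set v := z ^ n with hv
    have t1 : (W2 * W2) • f ((u * v - v * u) * (r * x)) ∈ TQ := by
      obtain ⟨v', hv', e⟩ := hW1T z (hBs (hCs hz))
      obtain ⟨x', hx', e'⟩ := hCsc x hx wB (by simp)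
      have := hK v' hv' y (hCs hy) (r * x') (hJB.ml _ _ hx')
      convert this using 1
      have e2 : f v' = W1 • f v := by rw [hv, map_pow]; exact e
      rw [mul_smul]
      congr 1
      simp only [map_mul, map_sub]
      rw [e2, ← e', hW2]
      simp only [mul_smul_comm, smul_mul_assoc, ← smul_sub, mul_smul]
      rw [← hu]
    have t2 : (W2 * W2) • f (((r * u - u * r) * v - v * (r * u - u * r)) * x) ∈ TQ := by
      obtain ⟨v', hv', e⟩ := hcm y (hCs hy) r (hCs hr)
      have := hK v' hv' z (hCs hz) x (hCs hx)
      convert this using 1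
      have e2 : f v' = W2 • f (u * r - r * u) := e
      rw [mul_smul]
      congr 1
      simp only [map_mul, map_sub] at e2 ⊢
      rw [e2, ← hv]
      simp only [mul_smul_comm, smul_mul_assoc, ← smul_sub]
      congr 1
      noncomm_ring
    have t3 : (W2 * W2) • f ((u * (r * v - v * r) - (r * v - v * r) * u) * x) ∈ TQ := by
      obtain ⟨v', hv', e⟩ := hcm z (hCs hz) r (hCs hr)
      have := TQ.neg_mem (hK v' hv' y (hCs hy) x (hCs hx))
      convert this using 1
      have e2 : f v' = W2 • f (v * r - r * v) := e
      rw [mul_smul, ← smul_neg]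
      congr 1
      simp only [map_mul, map_sub] at e2 ⊢
      rw [e2, ← hu]
      simp only [mul_smul_comm, smul_mul_assoc, ← smul_sub, ← smul_neg]
      congr 1
      noncomm_ring
    have := TQ.add_mem (TQ.add_mem t1 t2) t3
    rw [← smul_add, ← smul_add, ← map_add, ← map_add] at this
    convert this using 3
    noncomm_ring
  by_cases hcase : ∃ y ∈ JC, ∃ z ∈ JC, y ^ n * z ^ n - z ^ n * y ^ n ≠ 0
  · obtain ⟨y, hy, z, hz, hne⟩ := hcase
    have : ∃ r ∈ JC, r * (y ^ n * z ^ n - z ^ n * y ^ n) ≠ 0 := by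
      by_contra! hh
      exact hne (hJC.right_faithful hp hh)
    obtain ⟨r, hr, hne⟩ := this
    have : ∃ x ∈ JC, r * (y ^ n * z ^ n - z ^ n * y ^ n) * x ≠ 0 := by
      by_contra! hh
      exact hne (hJC.left_faithful hp hh)
    obtain ⟨x, hx, hne⟩ := this
    obtain ⟨m0, hm0, e0⟩ := hbig y hy z hz r hr x hx
    have hm00 : m0 ≠ 0 := by
      rintro rfl
      rw [map_zero] at e0
      rcases h.nz _ _ e0.symm with h1 | h1
      · exact mul_ne_zero hW20 hW20 h1
      · exact hne h1
    have hm0T : ∀ a, a * m0 ∈ T := by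
      intro a
      obtain ⟨m1, hm1, e1⟩ := hbig y hy z hz (a * r) (hJC.ml _ _ hr) x hx
      have : a * m0 = m1 := by
        apply h.inj
        change f m0 = _ at e0
        change f m1 = _ at e1
        rw [e1, map_mul, e0, mul_smul_comm, ← map_mul]
        simp only [mul_assoc]
      rw [this]; exact hm1
    have : ∃ j ∈ JA, m0 * j ≠ 0 := by
      by_contra! hh
      exact hm00 (hJA.left_faithful hp hh)
    obtain ⟨j, hj, hm0j⟩ := this
    refine ⟨m0 * j, hm0j, fun a b r => ?_⟩
    have h1 := hm0T a (j * b * r) (hJA.mr _ _ (hJA.mr _ _ hj))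
    have h2 := hm0T (r * a) (j * b) (hJA.mr _ _ hj)
    have := A.sub_mem h1 h2
    convert this using 1; noncomm_ring
  · exfalso
    push Not at hcase
    have hcase' : ∀ y ∈ JC, ∀ z ∈ JC, y ^ n * z ^ n = z ^ n * y ^ n := fun y hy z hz =>
      sub_eq_zero.1 (hcase y hy z hz)
    obtain ⟨JD, hJD, hDs, hDsc⟩ := h.scalePow hp mu B hJC
    have linc : ∀ b : R, (∀ y ∈ JC, y ^ n * b = b * y ^ n) → ∀ x ∈ JD, ∀ y ∈ JD,
        PP x y n 1 * b = b * PP x y n 1 := by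
      intro b hb x hx y hy
      let G : AddSubgroup Q := (AddMonoidHom.mulRight (f b) - AddMonoidHom.mulLeft (f b)).ker
      have h1 := lin mu G n 1 hn 1 (f x) (f y) ?_
      · have h2 : ((wl mu n 1 * 1) • PP (f x) (f y) n 1) * f b - f b * ((wl mu n 1 * 1) • PP (f x) (f y) n 1) = 0 := h1
        rw [← PP_map, smul_mul_assoc, mul_smul_comm, ← smul_sub, ← map_mul, ← map_mul, ← map_sub] at h2
        rcases h.nz _ _ h2 with h3 | h3
        · rw [mul_one] at h3
          exact absurd h3 hwB0
        · exact sub_eq_zero.1 h3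
      · intro k1 k2 hk1 hk2
        obtain ⟨u, hu, e⟩ := hDsc x hx k1 (by omega)
        obtain ⟨v, hv, e'⟩ := hDsc y hy k2 (by omega)
        change (1 : C) • (mu ^ k1 • f x + mu ^ k2 • f y) ^ n * f b - f b * ((1 : C) • (mu ^ k1 • f x + mu ^ k2 • f y) ^ n) = 0
        rw [one_smul, e, e', ← map_add, ← map_pow, ← map_mul, ← map_mul, hb _ (hJC.add _ _ hu hv), sub_self]
    have c1 : ∀ z ∈ JC, ∀ x ∈ JD, ∀ y ∈ JD, PP x y n 1 * z ^ n = z ^ n * PP x y n 1 :=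
      fun z hz => linc (z ^ n) (fun y hy => hcase' y hy z hz)
    have c2 : ∀ x ∈ JD, ∀ y ∈ JD, ∀ x' ∈ JD, ∀ z ∈ JD, PP x' z n 1 * PP x y n 1 = PP x y n 1 * PP x' z n 1 := by
      intro x hx y hy x' hx' z hz
      exact linc (PP x y n 1) (fun w hw => (c1 w hw x hx y hy).symm) x' hx' z hz
    have c3 : ∀ y ∈ JD, ∀ x ∈ JD, ∀ x' ∈ JD, PP x' y n 1 * (y ^ n * x - x * y ^ n) = 0 := by
      intro y hy x hx x' hx'
      have h1 := c2 x hx y hy (x' * y) (hJD.mr _ _ hx') y hy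
      have h2 := c2 x hx y hy x' hx' y hy
      rw [PP_mul_right, ← mul_assoc, ← h2] at h1
      rw [← comm_PP, mul_sub, ← mul_assoc, ← mul_assoc, h1, sub_self]
    have c4 : ∀ y ∈ JD, ∀ x ∈ JD, ∀ x' ∈ JD, (y ^ n * x' - x' * y ^ n) * (y ^ n * x - x * y ^ n) = 0 := by
      intro y hy x hx x' hx'
      have := c3 y hy x hx (y * x' - x' * y) (hJD.sub (hJD.ml _ _ hx') (hJD.mr _ _ hx'))
      rwa [PP_comm] at this
    have c5 : ∀ y ∈ JD, ∀ x ∈ JD, y ^ n * x - x * y ^ n = 0 := by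
      intro y hy x hx
      have : ∀ s ∈ JD, (y ^ n * x - x * y ^ n) * s * (y ^ n * x - x * y ^ n) = 0 := by
        intro s hs
        have h1 := c4 y hy (s * x) (hJD.mr _ _ hs) x hx
        have h2 := c4 y hy s hs x hx
        have h3 : (y ^ n * x - x * y ^ n) * s * (y ^ n * x - x * y ^ n) =
          (y ^ n * x - x * y ^ n) * (y ^ n * (s * x) - s * x * y ^ n) -
          (y ^ n * x - x * y ^ n) * (y ^ n * s - s * y ^ n) * x := by noncomm_ring
        rw [h3, h1, h2]; simp
      rcases hJD.prime hp this with h | h <;> exact h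
    refine powcentral_false h hp hg n hn hB hnc hJD ?_
    intro y hy s
    rw [← sub_eq_zero]
    apply hJD.right_faithful hp
    intro x hx
    have h1 := c5 y hy (x * s) (hJD.mr _ _ hx)
    have h2 := c5 y hy x hx
    rw [show x * (y ^ n * s - s * y ^ n) = (y ^ n * (x * s) - x * s * y ^ n) - (y ^ n * x - x * y ^ n) * s by noncomm_ring,
      h1, h2]; simp
end
end PC

namespace PC
open Polynomial

section
variable {F : Type*} [Field F] {V : Type*} [DecidableEq V]

/-- free algebra -/
abbrev FB (F V : Type*) [Field F] := MonoidAlgebra F (FreeMonoid V)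

noncomputable def cf (q : FB F V) (w : List V) : F := q.coeff (FreeMonoid.ofList w)

theorem cf_ext {q q' : FB F V} (h : ∀ w, cf q w = cf q' w) : q = q' := by
  apply MonoidAlgebra.coeff_injective
  ext w
  exact h (FreeMonoid.toList w)

theorem cf_add (q q' : FB F V) (w) : cf (q + q') w = cf q w + cf q' w := rfl
theorem cf_sub (q q' : FB F V) (w) : cf (q - q') w = cf q w - cf q' w := rfl
theorem cf_smul (a : F) (q : FB F V) (w) : cf (a • q) w = a * cf q w := rfl
theorem cf_sum {ι : Type*} (s : Finset ι) (q : ι → FB F V) (w) :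
    cf (∑ i ∈ s, q i) w = ∑ i ∈ s, cf (q i) w := by
  simp [cf, MonoidAlgebra.coeff_sum]

noncomputable def ev (v : V) : FB F V := MonoidAlgebra.single (FreeMonoid.of v) 1
noncomputable def SU (U : Finset V) : FB F V := ∑ u ∈ U, ev u

theorem cf_one (w : List V) : cf (1 : FB F V) w = if w = [] then 1 else 0 := by
  unfold cf
  classical
  rw [MonoidAlgebra.one_def, MonoidAlgebra.coeff_single, Finsupp.single_apply]
  refine if_congr ?_ rfl rfl
  rw [← FreeMonoid.ofList_nil, FreeMonoid.ofList.injective.eq_iff, eq_comm]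

theorem cf_ev_cons (u v : V) (q : FB F V) (w : List V) :
    cf (ev u * q) (v :: w) = if v = u then cf q w else 0 := by
  unfold cf ev
  split_ifs with h
  · subst h
    rw [FreeMonoid.ofList_cons, MonoidAlgebra.coeff_single_mul_mul, one_mul]
  · apply MonoidAlgebra.coeff_single_mul_of_forall_mul_ne
    intro d hd
    have := congrArg FreeMonoid.toList hd
    rw [FreeMonoid.toList_of_mul] at this
    simp at this
    exact h this.1.symm

theorem cf_ev_nil (u : V) (q : FB F V) : cf (ev u * q) [] = 0 := by
  unfold cf ev
  apply MonoidAlgebra.coeff_single_mul_of_forall_mul_ne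
  intro d hd
  have := congrArg FreeMonoid.toList hd
  rw [FreeMonoid.toList_of_mul] at this
  simp at this

theorem cf_SU_cons (U : Finset V) (v : V) (q : FB F V) (w : List V) :
    cf (SU U * q) (v :: w) = if v ∈ U then cf q w else 0 := by
  unfold SU
  rw [Finset.sum_mul, cf_sum]
  simp only [cf_ev_cons]
  rw [Finset.sum_ite_eq]

theorem cf_SU_nil (U : Finset V) (q : FB F V) : cf (SU U * q) [] = 0 := by
  unfold SU
  rw [Finset.sum_mul, cf_sum]
  simp only [cf_ev_nil, Finset.sum_const_zero]

/-- coefficient of the powers -/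
def okk (F : Type*) [Field F] (U W : Finset V) : ℕ → List V → F
  | 0, [] => 1
  | 0, _ :: _ => 0
  | _ + 1, [] => 0
  | _ + 1, [_] => 0
  | i + 1, u :: v :: w => if u ∈ U then (if v ∈ W then okk F U W i w else 0) else 0

theorem cf_pow (U W : Finset V) : ∀ (i : ℕ) (w : List V),
    cf ((SU U * SU W : FB F V) ^ i) w = okk F U W i w
  | 0, [] => by rw [pow_zero, cf_one]; simp [okk]
  | 0, _ :: _ => by rw [pow_zero, cf_one]; simp [okk]
  | i + 1, [] => by rw [pow_succ', mul_assoc, cf_SU_nil]; simp [okk]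
  | i + 1, [a] => by rw [pow_succ', mul_assoc, cf_SU_cons, cf_SU_nil]; simp [okk]
  | i + 1, u :: v :: w => by
    rw [pow_succ', mul_assoc, cf_SU_cons, cf_SU_cons, cf_pow U W i w]; simp [okk]

theorem okk_ne : ∀ (U W : Finset V) (i : ℕ) (w : List V), okk F U W i w ≠ 0 →
    w.length = 2 * i ∧ ∀ v ∈ w, v ∈ U ∨ v ∈ W
  | U, W, 0, [] => by simp
  | U, W, 0, _ :: _ => by simp [okk]
  | U, W, i + 1, [] => by simp [okk]
  | U, W, i + 1, [a] => by simp [okk]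
  | U, W, i + 1, u :: v :: w => by
    intro h
    unfold okk at h
    split_ifs at h with h1 h2
    · have := okk_ne U W i w h
      refine ⟨by simp [this.1]; ring, ?_⟩
      intro x hx
      simp at hx
      rcases hx with rfl | rfl | hx
      · exact Or.inl h1
      · exact Or.inr h2
      · exact this.2 x hx
    · exact absurd rfl h
    · exact absurd rfl h

theorem okk_congr : ∀ (U W U' W' : Finset V) (i : ℕ) (w : List V),
    (∀ v ∈ w, (v ∈ U ↔ v ∈ U')) → (∀ v ∈ w, (v ∈ W ↔ v ∈ W')) → okk F U W i w = okk F U' W' i w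
  | U, W, U', W', 0, [], _, _ => rfl
  | U, W, U', W', 0, _ :: _, _, _ => rfl
  | U, W, U', W', i + 1, [], _, _ => rfl
  | U, W, U', W', i + 1, [a], _, _ => rfl
  | U, W, U', W', i + 1, u :: v :: w, h1, h2 => by
    unfold okk
    rw [okk_congr U W U' W' i w (fun x hx => h1 x (by simp [hx])) (fun x hx => h2 x (by simp [hx]))]
    simp only [h1 u (by simp), h2 v (by simp)]

def alt : List V → List V → List V
  | a :: l, b :: m => a :: b :: alt l m
  | _, _ => []

theorem okk_alt : ∀ (U W : Finset V) (i : ℕ) (l m : List V), l.length = m.length →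
    okk F U W i (alt l m) = if i = l.length ∧ (∀ v ∈ l, v ∈ U) ∧ (∀ v ∈ m, v ∈ W) then 1 else 0
  | U, W, 0, [], [], _ => by simp [alt, okk]
  | U, W, i + 1, [], [], _ => by simp [alt, okk]
  | U, W, 0, a :: l, b :: m, _ => by simp [alt, okk]
  | U, W, i + 1, a :: l, b :: m, h => by
    have := okk_alt U W i l m (by simpa using h)
    simp only [alt, okk, this, List.mem_cons, forall_eq_or_imp, List.length_cons, Nat.add_right_cancel_iff]
    by_cases h1 : a ∈ U <;> by_cases h2 : b ∈ W <;> simp [h1, h2]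

/-- signed sums over subsets -/
def DD {M : Type*} [AddCommGroup M] (S : Finset V) (φ : Finset V → M) : M :=
  ∑ U ∈ S.powerset, (-1 : ℤ) ^ U.card • φ U

theorem DD_zero {M : Type*} [AddCommGroup M] (S : Finset V) (φ : Finset V → M) (v : V) (hv : v ∈ S)
    (h : ∀ U, U ⊆ S → v ∉ U → φ (insert v U) = φ U) : DD S φ = 0 := by
  unfold DD
  obtain ⟨T, hT, rfl⟩ : ∃ T, v ∉ T ∧ S = insert v T := ⟨S.erase v, by simp, by simp [hv]⟩
  rw [Finset.sum_powerset_insert hT, ← Finset.sum_add_distrib]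
  refine Finset.sum_eq_zero fun U hU => ?_
  have hU' := Finset.mem_powerset.1 hU
  have hvU : v ∉ U := fun h => hT (hU' h)
  rw [h U (hU'.trans (Finset.subset_insert _ _)) hvU, Finset.card_insert_of_notMem hvU, pow_succ]
  simp

theorem DD_top {M : Type*} [AddCommGroup M] (S : Finset V) (φ : Finset V → M)
    (h : ∀ U, U ⊆ S → U ≠ S → φ U = 0) : DD S φ = (-1 : ℤ) ^ S.card • φ S := by
  unfold DD
  refine Finset.sum_eq_single S ?_ ?_
  · intro U hU hne
    rw [h U (Finset.mem_powerset.1 hU) hne, smul_zero]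
  · intro h; simp at h

noncomputable def PCm {A : Type*} [Ring A] [Algebra F A] (p : F[X]) (a b : A) : A :=
  aeval (a * b) p - aeval (b * a) p

noncomputable def gg (p : F[X]) (S T : Finset V) : FB F V :=
  DD S fun U => DD T fun W => PCm p (SU U) (SU W)

theorem DD_map {M N : Type*} [AddCommGroup M] [AddCommGroup N] (f : M →+ N) (S : Finset V)
    (φ : Finset V → M) : f (DD S φ) = DD S fun U => f (φ U) := by
  unfold DD
  simp [map_sum]

theorem cf_DD (S : Finset V) (φ : Finset V → FB F V) (w : List V) :
    cf (DD S φ) w = DD S fun U => cf (φ U) w :=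
  DD_map (⟨⟨fun q => cf q w, rfl⟩, fun a b => cf_add a b w⟩ : FB F V →+ F) S φ

theorem cf_PC (p : F[X]) (U W : Finset V) (w : List V) : cf (PCm p (SU U) (SU W) : FB F V) w =
    ∑ i ∈ Finset.range (p.natDegree + 1), p.coeff i * (okk F U W i w - okk F W U i w) := by
  unfold PCm
  rw [aeval_eq_sum_range, aeval_eq_sum_range, cf_sub, cf_sum, cf_sum, ← Finset.sum_sub_distrib]
  refine Finset.sum_congr rfl fun i _ => ?_
  rw [cf_smul, cf_smul, cf_pow, cf_pow, mul_sub]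

theorem cf_gg (p : F[X]) (S T : Finset V) (w : List V) : cf (gg p S T) w =
    DD S fun U => DD T fun W => ∑ i ∈ Finset.range (p.natDegree + 1), p.coeff i * (okk F U W i w - okk F W U i w) := by
  unfold gg
  rw [cf_DD]
  congr 1; ext U
  rw [cf_DD]
  congr 1; ext W
  rw [cf_PC]

def MLw (S : Finset V) (w : List V) : Prop := w.Nodup ∧ ∀ v, v ∈ w ↔ v ∈ S

theorem DD_ne {M : Type*} [AddCommGroup M] {S : Finset V} {φ : Finset V → M} (h : DD S φ ≠ 0) :
    ∃ U ⊆ S, φ U ≠ 0 := by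
  by_contra hc
  push Not at hc
  apply h
  unfold DD
  refine Finset.sum_eq_zero fun U hU => ?_
  rw [hc U (Finset.mem_powerset.1 hU), smul_zero]

theorem gg_ML (p : F[X]) (n : ℕ) (hdeg : p.natDegree = n) (S T : Finset V) (hS : S.card = n) (hT : T.card = n)
    (hST : Disjoint S T) (w : List V) (h : cf (gg p S T) w ≠ 0) : MLw (S ∪ T) w := by
  rw [cf_gg] at h
  have hSw : ∀ v ∈ S, v ∈ w := by
    intro v hv
    by_contra hvw
    apply h
    apply DD_zero S _ v hv
    intro U hU hvU
    congr 1; ext W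
    refine Finset.sum_congr rfl fun i _ => ?_
    have : ∀ x ∈ w, (x ∈ insert v U ↔ x ∈ U) := by
      intro x hx
      have : x ≠ v := by rintro rfl; exact hvw hx
      simp [this]
    rw [okk_congr (insert v U) W U W i w this (by simp), okk_congr W (insert v U) W U i w (by simp) this]
  have hTw : ∀ v ∈ T, v ∈ w := by
    intro v hv
    by_contra hvw
    obtain ⟨U, hU, h⟩ := DD_ne h
    apply h
    apply DD_zero T _ v hv
    intro W hW hvU
    refine Finset.sum_congr rfl fun i _ => ?_
    have : ∀ x ∈ w, (x ∈ insert v W ↔ x ∈ W) := by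
      intro x hx
      have : x ≠ v := by rintro rfl; exact hvw hx
      simp [this]
    rw [okk_congr U (insert v W) U W i w (by simp) this, okk_congr (insert v W) U W U i w this (by simp)]
  obtain ⟨U, hU, h⟩ := DD_ne h
  obtain ⟨W, hW, h⟩ := DD_ne h
  obtain ⟨i, hi, h⟩ := Finset.exists_ne_zero_of_sum_ne_zero h
  have hi' : i ≤ n := by rw [← hdeg]; simpa [Nat.lt_succ_iff] using hi
  have key : w.length = 2 * i ∧ ∀ v ∈ w, v ∈ U ∨ v ∈ W := by
    by_cases h1 : okk F U W i w = 0
    · have h2 : okk F W U i w ≠ 0 := by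
        intro h2; rw [h1, h2] at h; simp at h
      have := okk_ne _ _ _ _ h2
      exact ⟨this.1, fun v hv => (this.2 v hv).symm⟩
    · exact okk_ne _ _ _ _ h1
  have hmem : ∀ v, v ∈ w ↔ v ∈ S ∪ T := by
    intro v
    rw [Finset.mem_union]
    refine ⟨fun hv => (key.2 v hv).imp (fun h => hU h) (fun h => hW h), ?_⟩
    rintro (h | h)
    · exact hSw v h
    · exact hTw v h
  refine ⟨?_, hmem⟩
  have e : w.toFinset = S ∪ T := by ext v; simp [hmem v]
  have hc : w.toFinset.card = 2 * n := by rw [e, Finset.card_union_of_disjoint hST, hS, hT]; ring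
  have h3 := List.toFinset_card_le w
  apply Multiset.coe_nodup.1
  apply Multiset.toFinset_card_eq_card_iff_nodup.1
  change w.toFinset.card = w.length
  omega

theorem gg_ne (p : F[X]) (n : ℕ) (hdeg : p.natDegree = n) (hn : 1 ≤ n) (S T : Finset V) (hS : S.card = n)
    (hT : T.card = n) (hST : Disjoint S T) : gg p S T ≠ (0 : FB F V) := by
  intro h0
  have hlen : S.toList.length = T.toList.length := by simp [hS, hT]
  have hlS : S.toList.length = n := by simp [hS]
  have h1 := cf_gg p S T (alt S.toList T.toList)
  rw [h0] at h1
  have hp : p.coeff n ≠ 0 := by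
    rw [← hdeg]; apply leadingCoeff_ne_zero.2
    rintro rfl; simp at hdeg; omega
  have val : ∀ U W : Finset V, U ⊆ S → W ⊆ T → ∑ i ∈ Finset.range (p.natDegree + 1), p.coeff i *
      (okk F U W i (alt S.toList T.toList) - okk F W U i (alt S.toList T.toList)) =
      if (∀ v ∈ S, v ∈ U) ∧ (∀ v ∈ T, v ∈ W) then p.coeff n else 0 := by
    intro U W hU hW
    rw [Finset.sum_eq_single n]
    · rw [okk_alt _ _ _ _ _ hlen, okk_alt _ _ _ _ _ hlen]
      obtain ⟨s, hs⟩ := Finset.card_pos.1 (by omega : 0 < S.card)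
      have : ¬ (∀ v ∈ S, v ∈ W) := fun h => Finset.disjoint_left.1 hST hs (hW (h s hs))
      simp [hS, this]
    · intro i _ hi
      rw [okk_alt _ _ _ _ _ hlen, okk_alt _ _ _ _ _ hlen]
      simp [hS, hi]
    · intro h; simp [hdeg] at h
  have h2 : (DD S fun U => DD T fun W => ∑ i ∈ Finset.range (p.natDegree + 1), p.coeff i *
      (okk F U W i (alt S.toList T.toList) - okk F W U i (alt S.toList T.toList))) =
      (-1 : ℤ) ^ S.card • (-1 : ℤ) ^ T.card • p.coeff n := by
    rw [DD_top]
    · congr 1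
      rw [DD_top]
      · rw [val S T subset_rfl subset_rfl]; simp
      · intro W hW hne
        rw [val S W subset_rfl hW, if_neg]
        rintro ⟨-, h⟩
        exact hne (Finset.Subset.antisymm hW h)
    · intro U hU hne
      unfold DD
      refine Finset.sum_eq_zero fun W hW => ?_
      beta_reduce
      rw [val U W hU (Finset.mem_powerset.1 hW), if_neg, smul_zero]
      rintro ⟨h, -⟩
      exact hne (Finset.Subset.antisymm hU h)
  rw [h2] at h1
  have h3 : cf (0 : FB F V) (alt S.toList T.toList) = 0 := rfl
  rw [h3] at h1
  rcases neg_one_pow_eq_or ℤ S.card with e1 | e1 <;> rcases neg_one_pow_eq_or ℤ T.card with e2 | e2 <;>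
    simp [e1, e2] at h1 <;> first | exact hp h1 | exact hp h1.symm
end
end PC

namespace PC
open Polynomial

/-- multilinear identity on a left ideal -/
structure MLI {F A V : Type*} [Field F] [Ring A] [Algebra F A] [DecidableEq V]
    (S : Finset V) (T : Finset (List V)) (c : List V → F) (Λ : Ideal A) : Prop where
  ne : T.Nonempty
  cne : ∀ w ∈ T, c w ≠ 0
  ml : ∀ w ∈ T, MLw S w
  id : ∀ x : V → A, (∀ v, x v ∈ Λ) → ∑ w ∈ T, c w • (w.map x).prod = 0

section
variable {F : Type*} [Field F] {V : Type*} [DecidableEq V] {R : Type*} [Ring R] [Algebra F R]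

noncomputable def EV (x : V → R) : FB F V →ₐ[F] R :=
  MonoidAlgebra.lift F R (FreeMonoid V) (FreeMonoid.lift x)

theorem EV_apply (x : V → R) (q : FB F V) :
    EV x q = ∑ w ∈ q.coeff.support, cf q w.toList • (w.toList.map x).prod := by
  unfold EV
  rw [MonoidAlgebra.lift_apply]
  unfold Finsupp.sum
  refine Finset.sum_congr rfl fun w _ => ?_
  beta_reduce
  rw [FreeMonoid.lift_apply]
  rfl

theorem EV_gg (p : F[X]) (S T : Finset V) (x : V → R) : EV x (gg p S T) ∈ AA R p := by
  unfold gg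
  have e1 := DD_map (EV x : FB F V →ₐ[F] R).toLinearMap.toAddMonoidHom S
    (fun U => DD T fun W => PCm p (SU U) (SU W))
  have e1' : EV x (DD S (fun U => DD T fun W => PCm p (SU U) (SU W))) = _ := e1
  rw [e1']
  unfold DD
  refine AddSubgroup.sum_mem _ fun U _ => AddSubgroup.zsmul_mem _ ?_ _
  change EV x (∑ W ∈ T.powerset, _) ∈ _
  rw [map_sum]
  refine AddSubgroup.sum_mem _ fun W _ => ?_
  rw [map_zsmul]
  refine AddSubgroup.zsmul_mem _ ?_ _
  unfold PCm
  rw [map_sub, ← aeval_algHom_apply, ← aeval_algHom_apply, map_mul, map_mul]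
  exact AA_mem p _ _

theorem word_lie (x : V → R) (r : R) : ∀ w : List V, w.Nodup →
    r * (w.map x).prod - (w.map x).prod * r =
      ∑ v ∈ w.toFinset, (w.map (Function.update x v (r * x v - x v * r))).prod
  | [], _ => by simp
  | a :: w, h => by
    have ha : a ∉ w := (List.nodup_cons.1 h).1
    have ih := word_lie x r w (List.nodup_cons.1 h).2
    rw [List.toFinset_cons, Finset.sum_insert (by simpa using ha)]
    have e1 : w.map (Function.update x a (r * x a - x a * r)) = w.map x := by
      apply List.map_congr_left
      intro v hv
      rw [Function.update_of_ne]; rintro rfl; exact ha hv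
    have e2 : ∑ v ∈ w.toFinset, ((a :: w).map (Function.update x v (r * x v - x v * r))).prod =
        x a * ∑ v ∈ w.toFinset, (w.map (Function.update x v (r * x v - x v * r))).prod := by
      rw [Finset.mul_sum]
      refine Finset.sum_congr rfl fun v hv => ?_
      rw [List.map_cons, List.prod_cons, Function.update_of_ne]
      rintro rfl; exact ha (by simpa using hv)
    rw [e2, ← ih, List.map_cons, List.prod_cons, List.map_cons, List.prod_cons, e1, Function.update_self]
    noncomm_ring

theorem EV_lie (S : Finset V) (q : FB F V) (hq : ∀ w, cf q w ≠ 0 → MLw S w) (x : V → R) (r : R) :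
    r * EV x q - EV x q * r = ∑ v ∈ S, EV (Function.update x v (r * x v - x v * r)) q := by
  simp only [EV_apply]
  rw [Finset.mul_sum, Finset.sum_mul, ← Finset.sum_sub_distrib, Finset.sum_comm]
  refine Finset.sum_congr rfl fun w hw => ?_
  have hw' : MLw S w.toList := hq _ (Finsupp.mem_support_iff.1 hw)
  rw [mul_smul_comm, smul_mul_assoc, ← smul_sub, word_lie x r _ hw'.1, Finset.smul_sum]
  have : w.toList.toFinset = S := by ext v; simp [hw'.2 v]
  rw [this]

theorem cf_mul_ne (q q' : FB F V) (w : List V) (h : cf (q * q') w ≠ 0) :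
    ∃ u v, w = u ++ v ∧ cf q u ≠ 0 ∧ cf q' v ≠ 0 := by
  classical
  have : FreeMonoid.ofList w ∈ (q * q').coeff.support := Finsupp.mem_support_iff.2 h
  have := MonoidAlgebra.support_coeff_mul_subset q q' this
  obtain ⟨u, hu, v, hv, e⟩ := Finset.mem_mul.1 this
  refine ⟨u.toList, v.toList, ?_, Finsupp.mem_support_iff.1 hu, Finsupp.mem_support_iff.1 hv⟩
  have := congrArg FreeMonoid.toList e
  simpa using this.symm

theorem exists_cf_ne {q : FB F V} (h : q ≠ 0) : ∃ w, cf q w ≠ 0 := by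
  by_contra hc
  push Not at hc
  exact h (cf_ext fun w => hc w)

theorem MLw_append {S T : Finset V} (hST : Disjoint S T) {u v : List V} (hu : MLw S u) (hv : MLw T v) :
    MLw (S ∪ T) (u ++ v) := by
  refine ⟨?_, ?_⟩
  · rw [List.nodup_append]
    refine ⟨hu.1, hv.1, ?_⟩
    rintro a ha b hb rfl
    exact Finset.disjoint_left.1 hST ((hu.2 a).1 ha) ((hv.2 a).1 hb)
  · intro a; rw [List.mem_append, Finset.mem_union, hu.2, hv.2]

theorem comm_ne {S T : Finset V} (hST : Disjoint S T) (hS : S.Nonempty) (hT : T.Nonempty) (q q' : FB F V)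
    (hq : ∀ w, cf q w ≠ 0 → MLw S w) (hq' : ∀ w, cf q' w ≠ 0 → MLw T w) (h0 : q ≠ 0) (h0' : q' ≠ 0) :
    q * q' - q' * q ≠ 0 := by
  intro h
  rw [sub_eq_zero] at h
  obtain ⟨w, hw⟩ := exists_cf_ne (mul_ne_zero h0 h0')
  obtain ⟨u, v, e, hu, hv⟩ := cf_mul_ne _ _ _ hw
  rw [h] at hw
  obtain ⟨u', v', e', hu', hv'⟩ := cf_mul_ne _ _ _ hw
  have m1 := hq _ hu
  have m2 := hq' _ hu'
  cases u with
  | nil =>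
    obtain ⟨s, hs⟩ := hS
    exact absurd ((m1.2 s).2 hs) (by simp)
  | cons a u =>
    cases u' with
    | nil =>
      obtain ⟨s, hs⟩ := hT
      exact absurd ((m2.2 s).2 hs) (by simp)
    | cons b u' =>
      rw [e] at e'
      simp at e'
      obtain ⟨rfl, -⟩ := e'
      exact Finset.disjoint_left.1 hST ((m1.2 a).1 (by simp)) ((m2.2 a).1 (by simp))

theorem step1 (p : F[X]) (n : ℕ) (hdeg : p.natDegree = n) (hn : 1 ≤ n) :
    CG (AA R p) ∨ ∃ (S : Finset ℕ) (T : Finset (List ℕ)) (c : List ℕ → F), MLI S T c (⊤ : Ideal R) := by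
  let S1 := Finset.Ico 0 n
  let S2 := Finset.Ico n (2 * n)
  let S3 := Finset.Ico (2 * n) (3 * n)
  let S4 := Finset.Ico (3 * n) (4 * n)
  have d12 : Disjoint S1 S2 := Finset.Ico_disjoint_Ico_consecutive _ _ _
  have d34 : Disjoint S3 S4 := Finset.Ico_disjoint_Ico_consecutive _ _ _
  have c1 : S1.card = n := by simp [S1]
  have c2 : S2.card = n := by simp [S2]; omega
  have c3 : S3.card = n := by simp [S3]; omega
  have c4 : S4.card = n := by simp [S4]; omega
  have dd : Disjoint (S1 ∪ S2) (S3 ∪ S4) := by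
    rw [Finset.disjoint_left]
    intro a
    simp [S1, S2, S3, S4]
    omega
  let g1 : FB F ℕ := gg p S1 S2
  let g2 : FB F ℕ := gg p S3 S4
  have m1 : ∀ w, cf g1 w ≠ 0 → MLw (S1 ∪ S2) w := gg_ML p n hdeg S1 S2 c1 c2 d12
  have m2 : ∀ w, cf g2 w ≠ 0 → MLw (S3 ∪ S4) w := gg_ML p n hdeg S3 S4 c3 c4 d34
  have n1 : g1 ≠ 0 := gg_ne p n hdeg hn S1 S2 c1 c2 d12
  have n2 : g2 ≠ 0 := gg_ne p n hdeg hn S3 S4 c3 c4 d34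
  have hh : g1 * g2 - g2 * g1 ≠ 0 := by
    refine comm_ne dd ?_ ?_ g1 g2 m1 m2 n1 n2
    · exact ⟨0, by simp [S1]; omega⟩
    · exact ⟨2 * n, by simp [S3]; omega⟩
  by_cases hc : ∃ x : ℕ → R, EV x g1 * EV x g2 - EV x g2 * EV x g1 ≠ 0
  · left
    obtain ⟨x, hx⟩ := hc
    let G : Set R := {y | ∃ x : ℕ → R, y = EV x g1 ∨ y = EV x g2}
    refine lemK' (A := AA R p) (L := AddSubgroup.closure G) ?_ rfl ?_ (u := EV x g1) (v := EV x g2) ?_ ?_ hx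
    · rw [AddSubgroup.closure_le]
      rintro y ⟨x, rfl | rfl⟩
      · exact EV_gg p S1 S2 x
      · exact EV_gg p S3 S4 x
    · rintro y ⟨x, rfl | rfl⟩ r
      · rw [← neg_sub, EV_lie _ g1 m1]
        refine neg_mem (sum_mem fun v _ => AddSubgroup.subset_closure ⟨_, Or.inl rfl⟩)
      · rw [← neg_sub, EV_lie _ g2 m2]
        refine neg_mem (sum_mem fun v _ => AddSubgroup.subset_closure ⟨_, Or.inr rfl⟩)
    · exact AddSubgroup.subset_closure ⟨x, Or.inl rfl⟩
    · exact AddSubgroup.subset_closure ⟨x, Or.inr rfl⟩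
  · right
    push Not at hc
    set h : FB F ℕ := g1 * g2 - g2 * g1 with hh'
    have supp : ∀ w, cf h w ≠ 0 → MLw ((S1 ∪ S2) ∪ (S3 ∪ S4)) w := by
      intro w hw
      have : cf (g1 * g2) w ≠ 0 ∨ cf (g2 * g1) w ≠ 0 := by
        by_contra hcc
        push Not at hcc
        apply hw
        rw [hh', cf_sub, hcc.1, hcc.2, sub_zero]
      rcases this with h1 | h1
      · obtain ⟨u, v, rfl, hu, hv⟩ := cf_mul_ne _ _ _ h1
        exact MLw_append dd (m1 _ hu) (m2 _ hv)
      · obtain ⟨u, v, rfl, hu, hv⟩ := cf_mul_ne _ _ _ h1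
        rw [Finset.union_comm]
        exact MLw_append dd.symm (m2 _ hu) (m1 _ hv)
    refine ⟨(S1 ∪ S2) ∪ (S3 ∪ S4), h.coeff.support.map FreeMonoid.toList.toEmbedding, cf h, ?_, ?_, ?_, ?_⟩
    · obtain ⟨w, hw⟩ := exists_cf_ne hh
      refine ⟨w, ?_⟩
      rw [Finset.mem_map]
      exact ⟨FreeMonoid.ofList w, Finsupp.mem_support_iff.2 hw, rfl⟩
    · intro w hw
      obtain ⟨u, hu, rfl⟩ := Finset.mem_map.1 hw
      exact Finsupp.mem_support_iff.1 hu
    · intro w hw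
      obtain ⟨u, hu, rfl⟩ := Finset.mem_map.1 hw
      apply supp
      exact Finsupp.mem_support_iff.1 hu
    · intro x _
      rw [Finset.sum_map]
      have := EV_apply x h
      rw [hh', map_sub, map_mul, map_mul, hc x] at this
      exact this.symm
end
end PC

namespace PC
open Polynomial

section
variable {F : Type*} [Field F] {V : Type*} [DecidableEq V] {A : Type*} [Ring A] [Algebra F A]

theorem list_prod_mem (Λ : Ideal A) : ∀ l : List A, l ≠ [] → (∀ a ∈ l, a ∈ Λ) → l.prod ∈ Λ
  | [], h, _ => absurd rfl h
  | [a], _, h => by simpa using h a (by simp)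
  | a :: b :: l, _, h => by
    rw [List.prod_cons]
    exact Λ.mul_mem_left _ (list_prod_mem Λ (b :: l) (by simp) fun x hx => h x (by simp at hx ⊢; tauto))

theorem map_update_of_notMem (x : V → A) (k : V) (y : A) (l : List V) (h : k ∉ l) :
    l.map (Function.update x k y) = l.map x := by
  apply List.map_congr_left
  intro v hv
  rw [Function.update_of_ne]; rintro rfl; exact h hv

theorem word_split (w : List V) (hw : w.Nodup) (k : V) (hk : k ∈ w) :
    ∃ l1 l2, w = l1 ++ k :: l2 ∧ ∀ (x : V → A) (y : A), (w.map (Function.update x k y)).prod =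
      (l1.map x).prod * y * (l2.map x).prod := by
  obtain ⟨l1, l2, rfl⟩ := List.append_of_mem hk
  refine ⟨l1, l2, rfl, ?_⟩
  intro x y
  rw [List.nodup_append] at hw
  have h1 : k ∉ l1 := fun h => hw.2.2 k h k (by simp) rfl
  have h2 : k ∉ l2 := (List.nodup_cons.1 hw.2.1).1
  rw [List.map_append, List.map_cons, List.prod_append, List.prod_cons, Function.update_self,
    map_update_of_notMem _ _ _ _ h1, map_update_of_notMem _ _ _ _ h2, mul_assoc]

theorem PI1_aux [Nontrivial A] (S : Finset V) (T : Finset (List V)) (c : List V → F) (Λ : Ideal A)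
    (h : MLI S T c Λ)
    (hmin : ∀ (S' : Finset V) (T' : Finset (List V)) (c' : List V → F) (Λ' : Ideal A), Λ' ≠ ⊥ →
      MLI S' T' c' Λ' → S.card ≤ S'.card) (s : A) (hs : s ∈ Λ) (hs0 : s ≠ 0) :
    ∃ (b0 : A) (I : Finset (List V)) (u v : List V → A), b0 ≠ 0 ∧ (∀ i ∈ I, v i ∈ Ideal.span {s}) ∧
      ∀ y ∈ Λ, b0 * y = ∑ i ∈ I, u i * y * v i := by
  classical
  obtain ⟨w0, hw0⟩ := h.ne
  have hw0n : w0 ≠ [] := by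
    rintro rfl
    have hS : S = ∅ := by
      ext v; simp [← (h.ml _ hw0).2 v]
    have hT : T = {[]} := by
      ext w
      simp only [Finset.mem_singleton]
      refine ⟨fun hw => ?_, fun hw => hw ▸ hw0⟩
      apply List.eq_nil_iff_forall_not_mem.2
      intro a ha
      have := ((h.ml _ hw).2 a).1 ha
      simp [hS] at this
    have := h.id (fun _ => 0) (fun _ => Λ.zero_mem)
    rw [hT, Finset.sum_singleton] at this
    simp at this
    exact h.cne _ hw0 this
  let k := w0.getLast hw0n
  have hw0k : w0 = w0.dropLast ++ [k] := (List.dropLast_append_getLast hw0n).symm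
  let Tk := (T.image List.dropLast).filter (fun w' => w' ++ [k] ∈ T)
  have memTk : ∀ w', w' ∈ Tk ↔ w' ++ [k] ∈ T := by
    intro w'
    simp only [Tk, Finset.mem_filter, Finset.mem_image, and_iff_right_iff_imp]
    intro hw
    exact ⟨_, hw, by simp⟩
  have hkS : k ∈ S := by
    rw [← (h.ml _ hw0).2 k, hw0k]; simp
  have hnot : ¬ MLI (S.erase k) Tk (fun w' => c (w' ++ [k])) (Ideal.span {s}) := by
    intro hh
    have := hmin _ _ _ _ (by rw [Ne, Ideal.span_singleton_eq_bot]; exact hs0) hh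
    have := Finset.card_erase_lt_of_mem hkS
    omega
  have hspan : Ideal.span {s} ≤ Λ := by rw [Ideal.span_singleton_le_iff_mem]; exact hs
  obtain ⟨x, hx, hne⟩ : ∃ x : V → A, (∀ v, x v ∈ Ideal.span {s}) ∧
      ∑ w ∈ Tk, c (w ++ [k]) • (w.map x).prod ≠ 0 := by
    by_contra hc
    push Not at hc
    apply hnot
    refine ⟨⟨w0.dropLast, ?_⟩, ?_, ?_, hc⟩
    · rw [memTk, ← hw0k]; exact hw0
    · intro w hw; exact h.cne _ ((memTk _).1 hw)
    · intro w hw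
      have := h.ml _ ((memTk _).1 hw)
      have h1 := this.1
      rw [List.nodup_append] at h1
      refine ⟨h1.1, ?_⟩
      intro v
      have h2 := this.2 v
      rw [Finset.mem_erase, ← h2, List.mem_append]
      have h3 : v ∈ w → v ≠ k := fun hv => h1.2.2 v hv k (by simp)
      simp
      tauto
  have hsp : ∀ w : List V, ∃ l1 l2 : List V, w ∈ T → w = l1 ++ k :: l2 ∧ ∀ (x : V → A) (y : A),
      (w.map (Function.update x k y)).prod = (l1.map x).prod * y * (l2.map x).prod := by
    intro w
    by_cases hw : w ∈ T
    · obtain ⟨l1, l2, h1⟩ := word_split (A := A) w (h.ml _ hw).1 k (((h.ml _ hw).2 k).2 hkS)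
      exact ⟨l1, l2, fun _ => h1⟩
    · exact ⟨[], [], fun h => absurd h hw⟩
  choose l1 l2 hl using hsp
  let P : List V → Prop := fun w => ∃ w', w = w' ++ [k]
  refine ⟨_, T.filter (fun w => ¬ P w), fun w => -(c w • ((l1 w).map x).prod), fun w => ((l2 w).map x).prod, hne, ?_, ?_⟩
  · intro w hw
    rw [Finset.mem_filter] at hw
    apply list_prod_mem
    · intro he
      simp at he
      apply hw.2
      refine ⟨l1 w, ?_⟩
      have := (hl w hw.1).1
      rw [he] at this
      exact this
    · intro a ha
      obtain ⟨v, -, rfl⟩ := List.mem_map.1 ha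
      exact hx v
  · intro y hy
    have h0 := h.id (Function.update x k y) (by
      intro v
      by_cases hv : v = k
      · subst hv; rw [Function.update_self]; exact hy
      · rw [Function.update_of_ne hv]; exact hspan (hx v))
    rw [← Finset.sum_filter_add_sum_filter_not T P] at h0
    have e1 : T.filter P = Tk.image (fun w' => w' ++ [k]) := by
      ext w
      simp only [Finset.mem_filter, Finset.mem_image, P, memTk]
      constructor
      · rintro ⟨h1, w', rfl⟩; exact ⟨w', h1, rfl⟩
      · rintro ⟨w', h1, rfl⟩; exact ⟨h1, w', rfl⟩
    rw [e1, Finset.sum_image (by intro a _ b _ hab; simpa using hab)] at h0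
    have e2 : ∑ w ∈ Tk, c (w ++ [k]) • ((w ++ [k]).map (Function.update x k y)).prod =
        (∑ w ∈ Tk, c (w ++ [k]) • (w.map x).prod) * y := by
      rw [Finset.sum_mul]
      refine Finset.sum_congr rfl fun w hw => ?_
      have h1 := (h.ml _ ((memTk _).1 hw)).1
      rw [List.nodup_append] at h1
      rw [List.map_append, List.prod_append, map_update_of_notMem _ _ _ _ (fun hk => h1.2.2 k hk k (by simp) rfl)]
      simp
    rw [e2] at h0
    rw [eq_neg_of_add_eq_zero_left h0, ← Finset.sum_neg_distrib]
    refine Finset.sum_congr rfl fun w hw => ?_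
    rw [Finset.mem_filter] at hw
    rw [(hl w hw.1).2]
    simp [neg_mul, smul_mul_assoc]

theorem PI1 [Nontrivial A] (hex : ∃ (S : Finset V) (T : Finset (List V)) (c : List V → F), MLI S T c (⊤ : Ideal A)) :
    ∃ Λ : Ideal A, Λ ≠ ⊥ ∧ ∀ s ∈ Λ, s ≠ 0 →
    ∃ (b0 : A) (I : Finset (List V)) (u v : List V → A), b0 ≠ 0 ∧ (∀ i ∈ I, v i ∈ Ideal.span {s}) ∧
      ∀ y ∈ Λ, b0 * y = ∑ i ∈ I, u i * y * v i := by
  classical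
  have hex' : ∃ m : ℕ, ∃ (S : Finset V) (T : Finset (List V)) (c : List V → F) (Λ : Ideal A), Λ ≠ ⊥ ∧ 
      MLI S T c Λ ∧ S.card = m := by
    obtain ⟨S, T, c, h⟩ := hex
    exact ⟨_, S, T, c, ⊤, top_ne_bot, h, rfl⟩
  obtain ⟨S, T, c, Λ, hΛ, h, hm⟩ := Nat.find_spec hex'
  refine ⟨Λ, hΛ, fun s hs hs0 => PI1_aux S T c Λ h ?_ s hs hs0⟩
  intro S' T' c' Λ' h1 h2
  rw [hm]
  exact Nat.find_min' hex' ⟨S', T', c', Λ', h1, h2, rfl⟩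
end
end PC

namespace PC
open Polynomial

section
variable {R : Type*} [Ring R] [Nontrivial R] (hp : Pr R)

theorem mq_ext : Ext (Subring.center (MQ hp)) (mqι hp) where
  inj := mqι_inj hp
  dom := by
    intro c
    obtain ⟨J, hJ, h⟩ := mq_dom hp (c : MQ hp)
    exact ⟨J, hJ, h⟩
  nz := by
    intro c x h0
    by_cases hx : x = 0
    · exact Or.inr hx
    left
    obtain ⟨J, hJ, h⟩ := mq_dom hp (c : MQ hp)
    have h0' : (c : MQ hp) * mqι hp x = 0 := h0
    apply Subtype.ext
    apply mq_faithful hp _ J hJ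
    intro y hy
    obtain ⟨z, hz⟩ := h y hy
    have : ∀ r, z * r * x = 0 := by
      intro r
      apply mqι_inj hp
      rw [map_mul, map_mul, ← hz, map_zero]
      have hc := Subring.mem_center_iff.1 c.2
      calc (c : MQ hp) * mqι hp y * mqι hp r * mqι hp x = ((c : MQ hp) * (mqι hp y * mqι hp r)) * mqι hp x := by
            noncomm_ring
        _ = (mqι hp y * mqι hp r) * ((c : MQ hp) * mqι hp x) := by rw [← hc]; noncomm_ring
        _ = 0 := by rw [h0', mul_zero]
    rcases hp _ _ this with h1 | h1
    · rw [hz, h1, map_zero]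
    · exact absurd h1 hx

theorem mq_center_domain : IsDomain (Subring.center (MQ hp)) := by
  have nzd : NoZeroDivisors (Subring.center (MQ hp)) := by
    constructor
    intro c d hcd
    by_cases hd : d = 0
    · exact Or.inr hd
    left
    obtain ⟨J, hJ, h⟩ := mq_dom hp (d : MQ hp)
    have : ∃ x ∈ J, (d : MQ hp) * mqι hp x ≠ 0 := by
      by_contra hc
      push Not at hc
      exact hd (Subtype.ext (mq_faithful hp _ J hJ hc))
    obtain ⟨x, hx, hne⟩ := this
    obtain ⟨y, hy⟩ := h x hx
    have h1 : c • mqι hp y = 0 := by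
      change (c : MQ hp) * mqι hp y = 0
      rw [← hy, ← mul_assoc]
      have : (c : MQ hp) * (d : MQ hp) = 0 := congrArg Subtype.val hcd
      rw [this, zero_mul]
    rcases (mq_ext hp).nz c y h1 with h2 | h2
    · exact h2
    · rw [hy, h2, map_zero] at hne; exact absurd rfl hne
  have nt : Nontrivial (Subring.center (MQ hp)) := by
    refine ⟨0, 1, fun h => ?_⟩
    have : (0 : MQ hp) = 1 := congrArg Subtype.val h
    have : mqι hp 0 = mqι hp 1 := by rw [map_zero, map_one, this]
    exact zero_ne_one (mqι_inj hp this)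
  exact NoZeroDivisors.to_isDomain _

theorem martindale (hp : Pr R) {ι : Type*} (Λ : Ideal R) (b0 : R) (hb0 : b0 ≠ 0) (I : Finset ι)
    (u v : ι → R) (h : ∀ y ∈ Λ, b0 * y = ∑ i ∈ I, u i * y * v i) :
    ∃ (w0 : R) (w : ι → R), w0 ≠ 0 ∧ (∀ i ∈ I, ∀ x, w i * x * w0 = w0 * x * w i) ∧
      ∀ z, ∀ l ∈ Λ, w0 * z * l = ∑ i ∈ I, w i * z * l * v i := by
  classical
  let Good : R → (ι → R) → Prop := fun w0 w => ∀ z, ∀ l ∈ Λ, w0 * z * l = ∑ i ∈ I, w i * z * l * v i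
  have hex : ∃ m : ℕ, ∃ w0 w, w0 ≠ 0 ∧ Good w0 w ∧ (I.filter (fun i => w i ≠ 0)).card = m := by
    refine ⟨_, b0, u, hb0, ?_, rfl⟩
    intro z l hl
    rw [mul_assoc, h _ (Λ.mul_mem_left z hl)]
    refine Finset.sum_congr rfl fun i _ => ?_
    noncomm_ring
  obtain ⟨w0, w, hw0, hw, hm⟩ := Nat.find_spec hex
  refine ⟨w0, w, hw0, ?_, hw⟩
  intro τ hτ x
  by_cases hwτ : w τ = 0
  · simp [hwτ]
  by_contra hne
  have hmin := Nat.find_min' hex (m := (I.filter (fun i => w τ * x * w i - w i * x * w τ ≠ 0)).card)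
    ⟨w τ * x * w0 - w0 * x * w τ, fun i => w τ * x * w i - w i * x * w τ, sub_ne_zero.2 hne, ?_, rfl⟩
  · have : (I.filter (fun i => w τ * x * w i - w i * x * w τ ≠ 0)).card < (I.filter (fun i => w i ≠ 0)).card := by
      apply Finset.card_lt_card
      rw [Finset.ssubset_iff_of_subset]
      · refine ⟨τ, by simp [hτ, hwτ], by simp⟩
      · intro i hi
        rw [Finset.mem_filter] at hi ⊢
        refine ⟨hi.1, fun h0 => hi.2 ?_⟩
        rw [h0]; simp
    omega
  · intro z l hl
    have e1 := hw z l hl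
    have e2 := hw (x * w τ * z) l hl
    calc (w τ * x * w0 - w0 * x * w τ) * z * l = w τ * x * (w0 * z * l) - w0 * (x * w τ * z) * l := by noncomm_ring
      _ = _ := by
        rw [e1, e2, Finset.mul_sum, ← Finset.sum_sub_distrib]
        refine Finset.sum_congr rfl fun i _ => ?_
        noncomm_ring

theorem JL {F V : Type*} [Field F] [Algebra F R] [DecidableEq V] [Finite (Subring.center (MQ hp))]
    (hex : ∃ (S : Finset V) (T : Finset (List V)) (c : List V → F), MLI S T c (⊤ : Ideal R)) :
    ∃ (J : Set R) (Λ : Ideal R), NZI J ∧ Λ ≠ ⊥ ∧ ∀ s ∈ Λ, s ≠ 0 → ∀ j ∈ J, ∀ l ∈ Λ, j * l ∈ Ideal.span {s} := by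
  classical
  have := Fintype.ofFinite (Subring.center (MQ hp))
  obtain ⟨Λ, hΛ, hPI⟩ := PI1 hex
  obtain ⟨J, hJ, -, hsc⟩ := (mq_ext hp).scale hp Finset.univ NZI.univ
  refine ⟨J, Λ, hJ, hΛ, ?_⟩
  intro s hs hs0 j hj l hl
  obtain ⟨b0, I, u, v, hb0, hv, h⟩ := hPI s hs hs0
  obtain ⟨w0, w, hw0, hpair, hid⟩ := martindale hp Λ b0 hb0 I u v h
  have hc : ∀ i, ∃ y, i ∈ I → mqι hp (w0) * mqι hp y = mqι hp (w i) * mqι hp j ∧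
      ∀ z, w i * z * j = w0 * z * y := by
    intro i
    by_cases hi : i ∈ I
    · obtain ⟨c, hcC, hc⟩ := mq_pair hp (w i) w0 hw0 (hpair i hi)
      obtain ⟨y, -, hy⟩ := hsc j hj ⟨c, hcC⟩ (Finset.mem_univ _)
      have hy' : c * mqι hp j = mqι hp y := hy
      have hcc := Subring.mem_center_iff.1 hcC
      have key : ∀ z, w i * z * j = w0 * z * y := by
        intro z
        apply mqι_inj hp
        simp only [map_mul]
        rw [hc, ← hy', ← hcc]
        calc mqι hp w0 * c * mqι hp z * mqι hp j = mqι hp w0 * (c * mqι hp z) * mqι hp j := by noncomm_ring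
          _ = _ := by rw [← hcc]; noncomm_ring
      refine ⟨y, fun _ => ⟨?_, key⟩⟩
      have := congrArg (mqι hp) (key 1)
      simpa using this.symm
    · exact ⟨0, fun h => absurd h hi⟩
  choose y hy using hc
  have : ∀ z, w0 * z * (j * l - ∑ i ∈ I, y i * l * v i) = 0 := by
    intro z
    have e := hid (z * j) l hl
    rw [mul_sub, sub_eq_zero, Finset.mul_sum]
    calc w0 * z * (j * l) = w0 * (z * j) * l := by noncomm_ring
      _ = _ := by
        rw [e]
        refine Finset.sum_congr rfl fun i hi => ?_
        calc w i * (z * j) * l * v i = (w i * z * j) * l * v i := by noncomm_ring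
          _ = _ := by rw [(hy i hi).2 z]; noncomm_ring
  have h0 := (hp _ _ this).resolve_left hw0
  rw [sub_eq_zero] at h0
  rw [h0]
  exact Submodule.sum_mem _ fun i hi => Ideal.mul_mem_left _ _ (hv i hi)

theorem brauer (hp : Pr R) (hid : ∀ e : R, e * e = e → e = 0 ∨ e = 1) {J : Set R} {Λ : Ideal R} (hJ : NZI J) (hΛ : Λ ≠ ⊥)
    (h : ∀ s ∈ Λ, s ≠ 0 → ∀ j ∈ J, ∀ l ∈ Λ, j * l ∈ Ideal.span {s}) :
    ∀ x : R, x ≠ 0 → ∃ y, y * x = 1 := by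
  let G : Set R := {y | ∃ j ∈ J, ∃ l ∈ Λ, y = j * l}
  let Λ' : Ideal R := Ideal.span G
  have hle : Λ' ≤ Λ := by
    rw [Ideal.span_le]
    rintro y ⟨j, hj, l, hl, rfl⟩
    exact Λ.mul_mem_left _ hl
  have hmin : ∀ t ∈ Λ', t ≠ 0 → ∀ y ∈ Λ', ∃ r, r * t = y := by
    intro t ht ht0 y hy
    have : Λ' ≤ Ideal.span {t} := by
      rw [Ideal.span_le]
      rintro y ⟨j, hj, l, hl, rfl⟩
      exact h t (hle ht) ht0 j hj l hl
    exact Ideal.mem_span_singleton'.1 (this hy)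
  obtain ⟨l, hl, hl0⟩ := Submodule.exists_mem_ne_zero_of_ne_bot hΛ
  have hne : ∃ j ∈ J, j * l ≠ 0 := by
    by_contra hc
    push Not at hc
    obtain ⟨j, hj, hj0⟩ := hJ.nz
    have : ∀ r, j * r * l = 0 := fun r => hc _ (hJ.mr r j hj)
    rcases hp _ _ this with h1 | h1
    · exact hj0 h1
    · exact hl0 h1
  obtain ⟨j, hj, hjl⟩ := hne
  have htm : j * l ∈ Λ' := Ideal.subset_span ⟨j, hj, l, hl, rfl⟩
  generalize j * l = t at hjl htm
  obtain ⟨r, hr⟩ := Pr.ne (hp := hp) hjl hjl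
  have ht'm : r * t ∈ Λ' := Λ'.mul_mem_left _ htm
  rw [mul_assoc] at hr
  generalize r * t = t' at hr ht'm
  obtain ⟨r, he⟩ := hmin (t * t') (Λ'.mul_mem_left _ ht'm) hr t' ht'm
  have hem : r * t ∈ Λ' := Λ'.mul_mem_left _ htm
  rw [← mul_assoc] at he
  generalize r * t = e at he hem
  have ht'0 : t' ≠ 0 := by rintro rfl; simp at hr
  have hidem : e * e = e := by
    by_contra hne
    obtain ⟨ρ, hρ⟩ := hmin (e * e - e) (Λ'.sub_mem (Λ'.mul_mem_left _ hem) hem) (sub_ne_zero.2 hne) t htm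
    apply hr
    rw [← hρ, mul_assoc, sub_mul, mul_assoc, he, he, sub_self, mul_zero]
  have he1 : e = 1 := by
    rcases hid e hidem with h1 | h1
    · rw [h1, zero_mul] at he; exact absurd he.symm ht'0
    · exact h1
  subst he1
  have htop : ∀ x, x ∈ Λ' := fun x => by simpa using Λ'.mul_mem_left x hem
  intro x hx
  exact hmin x (htop x) hx 1 hem

theorem center_finite [Finite (Subring.center (MQ hp))] : Finite (Subring.center R) := by
  have : ∀ z : Subring.center R, ∃ c : Subring.center (MQ hp), (c : MQ hp) = mqι hp z := by
    intro z
    have hz := Subring.mem_center_iff.1 z.2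
    obtain ⟨c, hc, e⟩ := mq_pair hp z 1 one_ne_zero (by intro x; simp [hz x])
    exact ⟨⟨c, hc⟩, by rw [e]; simp⟩
  choose g hg using this
  apply Finite.of_injective g
  intro a b hab
  apply Subtype.ext
  apply mqι_inj hp
  rw [← hg, ← hg, hab]
end
end PC

namespace PC
open Polynomial

section
variable {F : Type*} [Field F] {V : Type*} [DecidableEq V] {A : Type*} [Ring A] [Algebra F A]

theorem MLI_poly {S : Finset V} {T : Finset (List V)} {c : List V → F} (h : MLI S T c (⊤ : Ideal A)) :
    MLI S T c (⊤ : Ideal A[X]) := by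
  refine ⟨h.ne, h.cne, h.ml, ?_⟩
  have key : ∀ (P : Finset V) (x : V → A[X]), (∀ v ∈ S, v ∉ P → ∃ a, x v = C a) →
      ∑ w ∈ T, c w • (w.map x).prod = 0 := by
    intro P
    induction P using Finset.induction_on with
    | empty =>
      intro x hx
      have : ∀ v, ∃ a, v ∈ S → x v = C a := by
        intro v
        by_cases hv : v ∈ S
        · obtain ⟨a, ha⟩ := hx v hv (by simp)
          exact ⟨a, fun _ => ha⟩
        · exact ⟨0, fun h => absurd h hv⟩
      choose a ha using this
      have h0 := h.id a (fun _ => trivial)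
      have h1 := congrArg (C : A →+* A[X]) h0
      rw [map_sum, map_zero] at h1
      rw [← h1]
      refine Finset.sum_congr rfl fun w hw => ?_
      rw [← smul_C, map_list_prod, List.map_map]
      congr 2
      apply List.map_congr_left
      intro v hv
      exact ha v (((h.ml w hw).2 v).1 hv)
    | insert k P hk ih =>
      intro x hx
      by_cases hkS : k ∈ S
      · have gen : ∀ y : A[X], ∑ w ∈ T, c w • (w.map (Function.update x k y)).prod = 0 := by
          intro y
          have hsp : ∀ w : List V, ∃ l1 l2 : List V, w ∈ T → ∀ (x : V → A[X]) (y : A[X]),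
              (w.map (Function.update x k y)).prod = (l1.map x).prod * y * (l2.map x).prod := by
            intro w
            by_cases hw : w ∈ T
            · obtain ⟨l1, l2, -, h1⟩ := word_split (A := A[X]) w (h.ml _ hw).1 k (((h.ml _ hw).2 k).2 hkS)
              exact ⟨l1, l2, fun _ => h1⟩
            · exact ⟨[], [], fun h => absurd h hw⟩
          choose l1 l2 hl using hsp
          induction y using Polynomial.induction_on' with
          | add y z hy hz =>
            have : ∑ w ∈ T, c w • (w.map (Function.update x k (y + z))).prod =
                (∑ w ∈ T, c w • (w.map (Function.update x k y)).prod) +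
                ∑ w ∈ T, c w • (w.map (Function.update x k z)).prod := by
              rw [← Finset.sum_add_distrib]
              refine Finset.sum_congr rfl fun w hw => ?_
              rw [hl w hw, hl w hw, hl w hw, ← smul_add]
              congr 1
              noncomm_ring
            rw [this, hy, hz, add_zero]
          | monomial m a =>
            have h0 := ih (Function.update x k (C a)) (by
              intro v hv hvP
              by_cases hvk : v = k
              · subst hvk; exact ⟨a, by rw [Function.update_self]⟩
              · rw [Function.update_of_ne hvk]
                exact hx v hv (by simp [hvk, hvP]))
            have : ∑ w ∈ T, c w • (w.map (Function.update x k (monomial m a))).prod =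
                (∑ w ∈ T, c w • (w.map (Function.update x k (C a))).prod) * X ^ m := by
              rw [Finset.sum_mul]
              refine Finset.sum_congr rfl fun w hw => ?_
              rw [hl w hw, hl w hw, ← C_mul_X_pow_eq_monomial, smul_mul_assoc]
              congr 1
              rw [mul_assoc, mul_assoc, mul_assoc, X_pow_mul, mul_assoc]
            rw [this, h0, zero_mul]
        have := gen (x k)
        rwa [Function.update_eq_self] at this
      · apply ih
        intro v hv hvP
        apply hx v hv
        rw [Finset.mem_insert]
        rintro (rfl | h)
        · exact hkS hv
        · exact hvP h
  intro x _
  exact key S x (fun v hv hv' => absurd hv hv')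
end

section
variable {F : Type*} [Field F] {V : Type*} [DecidableEq V] {D : Type*} [DivisionRing D] [Algebra F D]

theorem integral_of_PI
    (hex : ∃ (S : Finset V) (T : Finset (List V)) (c : List V → F), MLI S T c (⊤ : Ideal D)) (x : D) :
    IsIntegral (Subring.center D) x := by
  classical
  have hex' : ∃ (S : Finset V) (T : Finset (List V)) (c : List V → F), MLI S T c (⊤ : Ideal D[X]) := by
    obtain ⟨S, T, c, h⟩ := hex
    exact ⟨S, T, c, MLI_poly h⟩
  obtain ⟨Λ, hΛ, hPI⟩ := PI1 hex'
  obtain ⟨l, hl, hl0⟩ := Submodule.exists_mem_ne_zero_of_ne_bot hΛ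
  obtain ⟨b0, I, u, v, hb0, hv, h⟩ := hPI ((X - C x) * l) (Λ.mul_mem_left _ hl) (mul_ne_zero (X_sub_C_ne_zero x) hl0)
  have hq : ∀ i, ∃ q, i ∈ I → v i = q * ((X - C x) * l) := by
    intro i
    by_cases hi : i ∈ I
    · obtain ⟨q, hq⟩ := Ideal.mem_span_singleton'.1 (hv i hi)
      exact ⟨q, fun _ => hq.symm⟩
    · exact ⟨0, fun h => absurd h hi⟩
  choose q hq using hq
  have hN : ∀ z, ∃ g, b0 * z = g * (X - C x) := by
    intro z
    refine ⟨∑ i ∈ I, u i * z * l * q i, ?_⟩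
    apply mul_right_cancel₀ hl0
    rw [mul_assoc, h (z * l) (Λ.mul_mem_left _ hl), Finset.sum_mul, Finset.sum_mul]
    refine Finset.sum_congr rfl fun i hi => ?_
    rw [hq i hi]
    noncomm_ring
  let N : D[X] → Prop := fun f => ∀ z, ∃ g, f * z = g * (X - C x)
  have hexm : ∃ m : ℕ, ∃ f, N f ∧ f ≠ 0 ∧ f.natDegree = m := ⟨_, b0, hN, hb0, rfl⟩
  obtain ⟨f, hf, hf0, hfm⟩ := Nat.find_spec hexm
  have hmin : ∀ g, N g → g ≠ 0 → f.natDegree ≤ g.natDegree := by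
    intro g hg hg0
    rw [hfm]
    exact Nat.find_min' hexm ⟨g, hg, hg0, rfl⟩
  have Nl : ∀ g r, N g → N (r * g) := by
    intro g r hg z
    obtain ⟨t, ht⟩ := hg z
    exact ⟨r * t, by rw [mul_assoc, ht, mul_assoc]⟩
  have Nr : ∀ g r, N g → N (g * r) := by
    intro g r hg z
    obtain ⟨t, ht⟩ := hg (r * z)
    exact ⟨t, by rw [mul_assoc, ht]⟩
  have Ns : ∀ g g', N g → N g' → N (g - g') := by
    intro g g' hg hg' z
    obtain ⟨t, ht⟩ := hg z
    obtain ⟨t', ht'⟩ := hg' z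
    exact ⟨t - t', by rw [sub_mul, ht, ht', sub_mul]⟩
  have hlc : f.leadingCoeff ≠ 0 := leadingCoeff_ne_zero.2 hf0
  set e : D[X] := C f.leadingCoeff⁻¹ * f with he
  have hedeg : e.natDegree = f.natDegree := natDegree_C_mul (inv_ne_zero hlc)
  have hemon : e.Monic := by
    unfold Monic
    rw [he, leadingCoeff_mul, leadingCoeff_C, inv_mul_cancel₀ hlc]
  have heN : N e := Nl _ _ hf
  clear_value e
  have hcen : ∀ n, e.coeff n ∈ Subring.center D := by
    intro n
    rw [Subring.mem_center_iff]
    intro d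
    have h0 : C d * e - e * C d = 0 := by
      by_contra hne
      have h1 := hmin _ (Ns _ _ (Nl e (C d) heN) (Nr e (C d) heN)) hne
      have hd : d ≠ 0 := by rintro rfl; simp at hne
      have h2 : (C d * e - e * C d).degree < (C d * e).degree := by
        have hdd : (C d * e).degree = (e * C d).degree := by
          rw [degree_mul, degree_mul, add_comm]
        apply degree_sub_lt hdd
        · exact mul_ne_zero (C_ne_zero.2 hd) hemon.ne_zero
        · rw [leadingCoeff_mul, leadingCoeff_mul, hemon.leadingCoeff, leadingCoeff_C]; simp
      have h3 := natDegree_lt_natDegree hne h2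
      rw [natDegree_C_mul hd, hedeg] at h3
      omega
    have := congrArg (fun g => coeff g n) h0
    simp only [coeff_sub, coeff_C_mul, coeff_mul_C, coeff_zero] at this
    exact sub_eq_zero.1 this
  have hlift : e ∈ lifts (algebraMap (Subring.center D) D) := by
    rw [lifts_iff_coeff_lifts]
    intro n
    exact ⟨⟨_, hcen n⟩, rfl⟩
  obtain ⟨e', he', -, hmon⟩ := lifts_and_natDegree_eq_and_monic hlift hemon
  refine ⟨e', hmon, ?_⟩
  rw [← eval_map, he']
  obtain ⟨g, hg⟩ := heN 1
  rw [mul_one] at hg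
  rw [hg, eval_mul_X_sub_C]
end

section
theorem eig {K D : Type*} [Field K] [Fintype K] [Ring D] (j : K →+* D) (a : K)
    (hne : ∃ b, b * j a ≠ j a * b) : ∃ μ : K, ∃ x : D, x ≠ 0 ∧ x * j a = j μ * x ∧ μ ≠ a := by
  classical
  letI : Module K D := Module.compHom D j
  have hsm : ∀ (k : K) (x : D), k • x = j k * x := fun _ _ => rfl
  let T : Module.End K D :=
    { toFun := fun x => x * j a
      map_add' := fun x y => add_mul _ _ _
      map_smul' := fun k x => by simp only [hsm, RingHom.id_apply, mul_assoc] }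
  have hT : ∀ x, T x = x * j a := fun _ => rfl
  by_contra hc
  push Not at hc
  have hinj : ∀ μ, μ ≠ a → ∀ x, aeval T (X - C μ) x = 0 → x = 0 := by
    intro μ hμ x hx
    by_contra hx0
    refine hμ (hc μ x hx0 ?_)
    simp [hT, Module.algebraMap_end_apply, hsm] at hx
    exact sub_eq_zero.1 hx
  have hprod : (X ^ Fintype.card K - X : K[X]) = ∏ μ : K, (X - C μ) := by
    have hc1 : 1 < Fintype.card K := Fintype.one_lt_card
    have hmon : (X ^ Fintype.card K - X : K[X]).Monic := by
      apply monic_X_pow_sub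
      rw [degree_X]; exact_mod_cast hc1
    have h1 := prod_multiset_X_sub_C_of_monic_of_roots_card_eq hmon (by
      rw [FiniteField.roots_X_pow_card_sub_X, FiniteField.X_pow_card_sub_X_natDegree_eq _ hc1]; rfl)
    rw [FiniteField.roots_X_pow_card_sub_X] at h1
    exact h1.symm
  have hpow : ∀ n x, (T ^ n) x = x * j a ^ n := by
    intro n
    induction n with
    | zero => intro x; simp
    | succ n ih => intro x; rw [pow_succ', Module.End.mul_apply, ih, hT, mul_assoc, pow_succ]
  have hzero : aeval T (X ^ Fintype.card K - X : K[X]) = 0 := by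
    ext x
    simp [hpow, hT]
    rw [← map_pow, FiniteField.pow_card, sub_self]
  rw [hprod, ← Finset.prod_erase_mul _ _ (Finset.mem_univ a), map_mul] at hzero
  have hinj2 : ∀ s : Finset K, a ∉ s → ∀ x, aeval T (∏ μ ∈ s, (X - C μ)) x = 0 → x = 0 := by
    intro s
    induction s using Finset.induction_on with
    | empty => intro _ x hx; simpa using hx
    | insert k s hk ih =>
      intro ha x hx
      rw [Finset.prod_insert hk, map_mul, Module.End.mul_apply] at hx
      simp only [Finset.mem_insert, not_or] at ha
      exact ih ha.2 x (hinj k (fun h => ha.1 h.symm) _ hx)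
  obtain ⟨b, hb⟩ := hne
  apply hb
  have h1 := congrArg (fun g : Module.End K D => g b) hzero
  simp only [Module.End.mul_apply, LinearMap.zero_apply] at h1
  have h2 := hinj2 _ (by simp) _ h1
  simp [hT, Module.algebraMap_end_apply, hsm] at h2
  exact sub_eq_zero.1 h2

variable {D : Type*} [DivisionRing D]

set_option maxHeartbeats 1000000 in
theorem comm_of_finite_center [Finite (Subring.center D)] (hInt : ∀ x : D, IsIntegral (Subring.center D) x) :
    ∀ a b : D, b * a = a * b := by
  classical
  intro a
  by_contra hcon
  push Not at hcon
  let Z := Subring.center D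
  have fin : ∀ x : D, Finite (Algebra.adjoin Z {x}) := by
    intro x
    have h1 := (hInt x).fg_adjoin_singleton
    haveI : Module.Finite Z (Subalgebra.toSubmodule (Algebra.adjoin Z {x})) := Module.Finite.iff_fg.2 h1
    exact Module.finite_of_finite Z (M := Subalgebra.toSubmodule (Algebra.adjoin Z {x}))
  let K1 := Algebra.adjoin Z {a}
  haveI : Finite K1 := fin a
  have hF : IsField K1 := Finite.isDomain_to_isField K1
  have haK : a ∈ K1 := Algebra.subset_adjoin rfl
  obtain ⟨μ, x, hx0, hxa, hμ⟩ : ∃ μ : K1, ∃ x : D, x ≠ 0 ∧ x * a = (μ : D) * x ∧ (μ : D) ≠ a := by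
    letI := hF.toField
    letI := Fintype.ofFinite K1
    obtain ⟨μ, x, h1, h2, h3⟩ := eig (K := K1) (K1.val.toRingHom) ⟨a, haK⟩ hcon
    exact ⟨μ, x, h1, h2, fun h => h3 (Subtype.ext h)⟩
  have hσ : ∀ k ∈ K1, ∃ k' ∈ K1, x * k = k' * x := by
    intro k hk
    induction hk using Algebra.adjoin_induction with
    | mem y hy =>
      rw [Set.mem_singleton_iff] at hy
      subst hy
      exact ⟨μ, μ.2, hxa⟩
    | algebraMap r =>
      exact ⟨algebraMap Z D r, Subalgebra.algebraMap_mem _ _, (Algebra.commutes r x).symm⟩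
    | add y z _ _ hy hz =>
      obtain ⟨y', h1, h2⟩ := hy
      obtain ⟨z', h3, h4⟩ := hz
      exact ⟨y' + z', add_mem h1 h3, by rw [mul_add, h2, h4, add_mul]⟩
    | mul y z _ _ hy hz =>
      obtain ⟨y', h1, h2⟩ := hy
      obtain ⟨z', h3, h4⟩ := hz
      exact ⟨y' * z', mul_mem h1 h3, by rw [← mul_assoc, h2, mul_assoc, h4, mul_assoc]⟩
  have hσn : ∀ n : ℕ, ∀ k ∈ K1, ∃ k' ∈ K1, x ^ n * k = k' * x ^ n := by
    intro n
    induction n with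
    | zero => intro k hk; exact ⟨k, hk, by simp⟩
    | succ n ih =>
      intro k hk
      obtain ⟨k1, h1, h2⟩ := hσ k hk
      obtain ⟨k2, h3, h4⟩ := ih k1 h1
      exact ⟨k2, h3, by rw [pow_succ, mul_assoc, h2, ← mul_assoc, h4, mul_assoc]⟩
  let M : Submonoid D :=
    { carrier := {y | ∃ k ∈ K1, ∃ n : ℕ, y = k * x ^ n}
      one_mem' := ⟨1, one_mem _, 0, by simp⟩
      mul_mem' := by
        rintro _ _ ⟨k, hk, n, rfl⟩ ⟨k', hk', n', rfl⟩
        obtain ⟨k2, h3, h4⟩ := hσn n k' hk'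
        refine ⟨k * k2, mul_mem hk h3, n + n', ?_⟩
        rw [pow_add, mul_assoc, ← mul_assoc (x ^ n), h4]
        simp only [mul_assoc] }
  have hMfin : (M : Set D).Finite := by
    have h1 : (K1 : Set D).Finite := Set.toFinite _
    haveI := fin x
    have h2 : ((Algebra.adjoin Z {x} : Subalgebra Z D) : Set D).Finite := Set.toFinite _
    refine (Set.Finite.image2 (fun s t => s * t) h1 h2).subset ?_
    rintro y ⟨k, hk, n, rfl⟩
    have hxm : x ∈ Algebra.adjoin Z {x} := Algebra.subset_adjoin (Set.mem_singleton x)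
    exact ⟨k, hk, x ^ n, Subalgebra.pow_mem _ hxm n, rfl⟩
  obtain ⟨W, hW⟩ : ∃ W : Subalgebra Z D, W = Algebra.adjoin Z {a, x} := ⟨_, rfl⟩
  have hWle : Subalgebra.toSubmodule W ≤ Submodule.span Z (M : Set D) := by
    rw [hW, Algebra.adjoin_eq_span]
    apply Submodule.span_mono
    change Submonoid.closure {a, x} ≤ M
    rw [Submonoid.closure_le]
    rintro y (rfl | rfl)
    · exact ⟨y, haK, 0, by simp⟩
    · exact ⟨1, one_mem _, 1, by simp⟩
  have hWfin : Finite W := by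
    haveI : Module.Finite Z (Submodule.span Z (M : Set D)) := Module.Finite.span_of_finite Z hMfin
    haveI : Finite (Submodule.span Z (M : Set D)) := Module.finite_of_finite Z
    have : ((Submodule.span Z (M : Set D) : Submodule Z D) : Set D).Finite := Set.toFinite _
    have h3 : (W : Set D).Finite := this.subset (fun y hy => hWle hy)
    exact h3.to_subtype
  have hxW : x ∈ W := hW ▸ Algebra.subset_adjoin (by simp)
  have haW : a ∈ W := hW ▸ Algebra.subset_adjoin (by simp)
  have hWF : IsField W := Finite.isDomain_to_isField W
  have := hWF.mul_comm ⟨x, hxW⟩ ⟨a, haW⟩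
  have h1 : x * a = a * x := congrArg Subtype.val this
  rw [hxa] at h1
  exact hμ (mul_right_cancel₀ hx0 h1)
end

theorem case3 {F : Type*} [Field F] {R : Type*} [Ring R] [Nontrivial R] [Algebra F R] (hp : Pr R)
    [Finite (Subring.center (MQ hp))] (hid : ∀ e : R, e * e = e → e = 0 ∨ e = 1)
    (p : F[X]) (n : ℕ) (hdeg : p.natDegree = n) (hn : 1 ≤ n)
    (hnc : ∃ a b : R, a * b ≠ b * a) : CG (AA R p) := by
  rcases step1 (R := R) p n hdeg hn with h | hex
  · exact h
  exfalso
  obtain ⟨J, Λ, hJ, hΛ, h⟩ := JL hp hex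
  have hinv := brauer hp hid hJ hΛ h
  haveI := center_finite hp
  have hu : ∀ a : R, IsUnit a ∨ a = 0 := by
    intro a
    by_cases ha : a = 0
    · exact Or.inr ha
    left
    obtain ⟨y, hy⟩ := hinv a ha
    have hy0 : y ≠ 0 := by rintro rfl; simp at hy
    obtain ⟨z, hz⟩ := hinv y hy0
    have : z = a := by
      calc z = z * (y * a) := by rw [hy, mul_one]
        _ = a := by rw [← mul_assoc, hz, one_mul]
    subst this
    exact ⟨⟨z, y, hz, hy⟩, rfl⟩
  letI : DivisionRing R := DivisionRing.ofIsUnitOrEqZero hu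
  obtain ⟨a, b, hab⟩ := hnc
  exact hab (comm_of_finite_center (D := R) (fun x => integral_of_PI (F := F) hex x) b a)
end PC

namespace PC
open Polynomial
theorem main_CG {F : Type*} [Field F] {R : Type*} [Ring R] [Nontrivial R] [Algebra F R] (hp : Pr R)
    (p : F[X]) (n : ℕ) (hdeg : p.natDegree = n) (hn : 1 ≤ n)
    (hZ : ∃ g : Fin (n + 1) → R, Function.Injective g ∧ ∀ i, g i ∈ Subring.center R)
    (hnc : ∃ a b : R, a * b ≠ b * a) : CG (AA R p) := by
  by_cases hid : ∃ e : R, e * e = e ∧ e ≠ 0 ∧ e ≠ 1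
  · obtain ⟨e, h1, h2, h3⟩ := hid
    exact case1 p hp n hdeg hn hZ e h1 h2 h3
  have hid' : ∀ e : R, e * e = e → e = 0 ∨ e = 1 := by
    intro e he
    by_contra hc
    push Not at hc
    exact hid ⟨e, he, hc.1, hc.2⟩
  rcases finite_or_infinite (Subring.center (MQ hp)) with hf | hf
  · exact case3 hp hid' p n hdeg hn hnc
  · haveI := mq_center_domain hp
    exact case2 (mq_ext hp) hp p n hdeg hn hnc
end PC

/-- Let `R` be a noncommutative prime unital `F`-algebra and
`p ∈ F[x]` nonconstant of degree `n ≥ 1`, with the center of `R` containing at least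
`n+1` distinct elements. Then (a) the additive subgroup generated by the additive
`p`-commutators `p(ab) − p(ba)` is contained in the additive subgroup generated by
commutators, (b) there is a nonzero two-sided ideal `M` with `xm − mx` an element of
that subgroup for all `m ∈ M`, `x ∈ R`, and (c) if `R` is simple the two subgroups are
equal. -/
theorem stmt_16 (F : Type*) [Field F] (R : Type*) [Ring R] [Algebra F R]
    (hnc : ∃ a b : R, a * b ≠ b * a)
    (hprime : ∀ a b : R, (∀ r : R, a * r * b = 0) → a = 0 ∨ b = 0)
    (p : Polynomial F) (n : ℕ) (hdeg : p.natDegree = n) (hn : 1 ≤ n)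
    (hZ : ∃ g : Fin (n + 1) → R, Function.Injective g ∧
      ∀ i, g i ∈ Subring.center R) :
    (AddSubgroup.closure
        {x : R | ∃ a b : R,
          x = Polynomial.aeval (a * b) p - Polynomial.aeval (b * a) p} ≤
      AddSubgroup.closure {x : R | ∃ a b : R, x = a * b - b * a}) ∧
    (∃ M : TwoSidedIdeal R, M ≠ ⊥ ∧ ∀ m ∈ M, ∀ x : R,
        x * m - m * x ∈ AddSubgroup.closure
          {y : R | ∃ a b : R,
            y = Polynomial.aeval (a * b) p - Polynomial.aeval (b * a) p}) ∧
    (IsSimpleRing R →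
      AddSubgroup.closure
          {x : R | ∃ a b : R,
            x = Polynomial.aeval (a * b) p - Polynomial.aeval (b * a) p} =
        AddSubgroup.closure {x : R | ∃ a b : R, x = a * b - b * a}) := by
  have hnt : Nontrivial R := by
    obtain ⟨a, b, hab⟩ := hnc
    exact ⟨_, _, hab⟩
  have hCG := PC.main_CG (show PC.Pr R from hprime) p n hdeg hn hZ hnc
  have ha := PC.AA_le (R := R) p
  obtain ⟨M, hM, hMc⟩ := hCG.ideal
  refine ⟨ha, ⟨M, hM, hMc⟩, ?_⟩
  intro hs
  refine le_antisymm ha ?_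
  rw [AddSubgroup.closure_le]
  rintro x ⟨a, b, rfl⟩
  have hb : b ∈ M := by
    rcases eq_bot_or_eq_top M with h | h
    · exact absurd h hM
    · rw [h]; trivial
  exact hMc b hb a
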